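/- arXiv:2201.05328 — 3 statements merged into one kernel-verified Lean document; each statement's English description precedes it below -/
import Mathlib

section
/- For every real ω, ∫_{−∞}^{∞} sech t · cos(ωt) dt = π sech(πω/2), where sech s = 1/cosh s. -/
open Real MeasureTheory

theorem sigmoid_two_mul (t : ℝ) : sigmoid (2 * t) = exp t / (2 * cosh t) := by
  have h : exp t ≠ 0 := exp_ne_zero t
  rw [sigmoid_def, cosh_eq, show -(2 * t) = -t + -t by ring, exp_add, exp_neg]
  field_simp

theorem one_sub_sigmoid_two_mul (t : ℝ) : 1 - sigmoid (2 * t) = exp (-t) / (2 * cosh t) := by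
  rw [← sigmoid_neg, ← mul_neg, sigmoid_two_mul, cosh_neg]

theorem range_sigmoid_two_mul : Set.range (fun t : ℝ ↦ sigmoid (2 * t)) = Set.Ioo 0 1 := by
  rw [← range_sigmoid]
  exact (mul_left_surjective₀ two_ne_zero).range_comp sigmoid

theorem hasDerivAt_sigmoid_two_mul (t : ℝ) :
    HasDerivAt (fun t : ℝ ↦ sigmoid (2 * t)) (1 / (2 * cosh t ^ 2)) t := by
  have h := (hasDerivAt_sigmoid (2 * t)).comp t ((hasDerivAt_id t).const_mul 2)
  refine h.congr_deriv ?_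
  have hc : cosh t ≠ 0 := (cosh_pos t).ne'
  rw [one_sub_sigmoid_two_mul, sigmoid_two_mul, exp_neg]
  have : exp t ≠ 0 := exp_ne_zero t
  field_simp

/-- Pulling back the integrand of `B((1 + iω)/2, (1 - iω)/2)` along `t ↦ sigmoid (2 * t)` gives
`e ^ (iωt) / cosh t`. -/
theorem abs_deriv_smul_betaIntegrand_sigmoid (ω t : ℝ) :
    |1 / (2 * cosh t ^ 2)| • (((sigmoid (2 * t) : ℝ) : ℂ) ^ ((1 + ω * Complex.I) / 2 - 1) *
      (1 - ((sigmoid (2 * t) : ℝ) : ℂ)) ^ ((1 - ω * Complex.I) / 2 - 1)) =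
      ((1 / cosh t : ℝ) : ℂ) * Complex.exp ((ω * t : ℝ) * Complex.I) := by
  have hc : 0 < cosh t := cosh_pos t
  have h2 : 0 < 2 * cosh t := by positivity
  have hlog (s : ℝ) : log (exp s / (2 * cosh t)) = s - log (2 * cosh t) := by
    rw [log_div (exp_ne_zero s) h2.ne', log_exp]
  have hne (s : ℝ) : ((exp s / (2 * cosh t) : ℝ) : ℂ) ≠ 0 :=
    Complex.ofReal_ne_zero.2 (div_pos (exp_pos s) h2).ne'
  have hL : Complex.exp (log (2 * cosh t) : ℝ) = ((2 * cosh t : ℝ) : ℂ) := by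
    rw [← Complex.ofReal_exp, exp_log h2]
  rw [abs_of_pos (by positivity), ← Complex.ofReal_one, ← Complex.ofReal_sub,
    one_sub_sigmoid_two_mul, sigmoid_two_mul, Complex.cpow_def_of_ne_zero (hne _),
    Complex.cpow_def_of_ne_zero (hne _), ← Complex.ofReal_log (div_pos (exp_pos _) h2).le,
    ← Complex.ofReal_log (div_pos (exp_pos _) h2).le, hlog, hlog, ← Complex.exp_add,
    show ∀ L : ℝ, ((t - L : ℝ) : ℂ) * (((1 : ℝ) + ω * Complex.I) / 2 - (1 : ℝ)) +
      ((-t - L : ℝ) : ℂ) * (((1 : ℝ) - ω * Complex.I) / 2 - (1 : ℝ)) =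
      L + (ω * t : ℝ) * Complex.I by intro L; push_cast; ring,
    Complex.exp_add, hL, Complex.real_smul, ← mul_assoc, ← Complex.ofReal_mul]
  congr 2
  field_simp

theorem integrable_exp_mul_I_div_cosh (ω : ℝ) :
    Integrable fun t : ℝ ↦ ((1 / cosh t : ℝ) : ℂ) * Complex.exp ((ω * t : ℝ) * Complex.I) := by
  have h := Complex.betaIntegral_convergent (u := (1 + ω * Complex.I) / 2)
    (v := (1 - ω * Complex.I) / 2) (by simp) (by simp)
  rw [intervalIntegrable_iff_integrableOn_Ioo_of_le zero_le_one, ← range_sigmoid_two_mul,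
    ← Set.image_univ, integrableOn_image_iff_integrableOn_abs_deriv_smul MeasurableSet.univ
      (fun t _ ↦ (hasDerivAt_sigmoid_two_mul t).hasDerivWithinAt)
      (sigmoid_injective.comp (mul_right_injective₀ two_ne_zero)).injOn, integrableOn_univ] at h
  simpa only [abs_deriv_smul_betaIntegrand_sigmoid] using h

theorem integral_exp_mul_I_div_cosh (ω : ℝ) :
    ∫ t : ℝ, ((1 / cosh t : ℝ) : ℂ) * Complex.exp ((ω * t : ℝ) * Complex.I) =
      (π * (1 / cosh (π * ω / 2)) : ℝ) := by
  have h : Complex.betaIntegral ((1 + ω * Complex.I) / 2) ((1 - ω * Complex.I) / 2) =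
      ∫ t : ℝ, ((1 / cosh t : ℝ) : ℂ) * Complex.exp ((ω * t : ℝ) * Complex.I) := by
    rw [Complex.betaIntegral, intervalIntegral.integral_of_le zero_le_one,
      integral_Ioc_eq_integral_Ioo, ← range_sigmoid_two_mul, ← Set.image_univ,
      integral_image_eq_integral_abs_deriv_smul MeasurableSet.univ
        (fun t _ ↦ (hasDerivAt_sigmoid_two_mul t).hasDerivWithinAt)
        (sigmoid_injective.comp (mul_right_injective₀ two_ne_zero)).injOn, setIntegral_univ]
    simp only [abs_deriv_smul_betaIntegrand_sigmoid]
  rw [← h, Complex.betaIntegral_eq_Gamma_mul_div _ _ (by simp) (by simp),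
    show (1 - ω * Complex.I) / 2 = 1 - (1 + ω * Complex.I) / 2 by ring, add_sub_cancel,
    Complex.Gamma_one, div_one, Complex.Gamma_mul_Gamma_one_sub,
    show π * ((1 + ω * Complex.I) / 2) = (π * ω / 2 : ℂ) * Complex.I + π / 2 by ring,
    Complex.sin_add_pi_div_two, Complex.cos_mul_I]
  push_cast
  ring

/-- For every real `ω`, `∫_{−∞}^{∞} sech t · cos(ωt) dt = π sech(πω/2)`,
where `sech s = 1 / cosh s`. -/
theorem stmt_12 (ω : ℝ) :
    ∫ t : ℝ, (1 / Real.cosh t) * Real.cos (ω * t) = π * (1 / Real.cosh (π * ω / 2)) := by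
  have h := integral_re (integrable_exp_mul_I_div_cosh ω)
  rw [integral_exp_mul_I_div_cosh] at h
  simpa only [RCLike.re_eq_complex_re, Complex.re_ofReal_mul, Complex.exp_ofReal_mul_I_re,
    Complex.ofReal_re] using h
end

section
/- Let k ∈ (0, 1), let m, n be relatively prime positive integers, and suppose ω = πm/(2nK(k)), so that 2πm/ω = 4nK(k). Then for all real β, δ, θ, the subharmonic Melnikov integral along x^k evaluates as ∫₀^{2πm/ω} x^k₂(t)(β cos(ωt + θ) − δ x^k₂(t)) dt = −16nδ(E(k) − (1 − k²)K(k)) + J₂ β cos θ, where J₂ = 4π sech(ωK(k')) if n = 1 and m is odd, and J₂ = 0 if n ≠ 1 or m is even. -/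
open Real

/-- The complete elliptic integral of the first kind. -/
noncomputable def Kell (k : ℝ) : ℝ :=
  ∫ φ in (0 : ℝ)..(π / 2), 1 / Real.sqrt (1 - k ^ 2 * Real.sin φ ^ 2)

/-- The complete elliptic integral of the second kind. -/
noncomputable def Eell (k : ℝ) : ℝ :=
  ∫ φ in (0 : ℝ)..(π / 2), Real.sqrt (1 - k ^ 2 * Real.sin φ ^ 2)

open Set Filter Topology MeasureTheory

/-- The Jacobi amplitude factor `Δ(φ) = √(1 - k² sin² φ)`. -/
noncomputable def jacobiDelta (k φ : ℝ) : ℝ := √(1 - k ^ 2 * sin φ ^ 2)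

/-- The incomplete elliptic integral of the first kind. -/
noncomputable def ellipticF (k φ : ℝ) : ℝ := ∫ u in (0 : ℝ)..φ, 1 / jacobiDelta k u

section basic

variable {k : ℝ}

lemma one_sub_pos (hk : k ∈ Ioo (0 : ℝ) 1) (φ : ℝ) : 0 < 1 - k ^ 2 * sin φ ^ 2 := by
  have h1 : k ^ 2 < 1 := by nlinarith [hk.1, hk.2]
  nlinarith [sin_sq_add_cos_sq φ, sq_nonneg (cos φ), sq_nonneg (sin φ), sq_nonneg k]

lemma jacobiDelta_pos (hk : k ∈ Ioo (0 : ℝ) 1) (φ : ℝ) : 0 < jacobiDelta k φ :=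
  sqrt_pos.2 (one_sub_pos hk φ)

lemma jacobiDelta_sq (hk : k ∈ Ioo (0 : ℝ) 1) (φ : ℝ) :
    jacobiDelta k φ ^ 2 = 1 - k ^ 2 * sin φ ^ 2 :=
  sq_sqrt (one_sub_pos hk φ).le

@[fun_prop]
lemma continuous_jacobiDelta : Continuous (jacobiDelta k) := by
  unfold jacobiDelta; fun_prop

lemma hasDerivAt_jacobiDelta (hk : k ∈ Ioo (0 : ℝ) 1) (φ : ℝ) :
    HasDerivAt (jacobiDelta k) (-(k ^ 2 * sin φ * cos φ / jacobiDelta k φ)) φ := by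
  have h := ((((hasDerivAt_sin φ).pow 2).const_mul (k ^ 2)).const_sub 1).sqrt (one_sub_pos hk φ).ne'
  have hd := (jacobiDelta_pos hk φ).ne'
  refine h.congr_deriv ?_
  change _ / (2 * jacobiDelta k φ) = _
  field_simp
  simp
  ring

lemma continuous_inv_jacobiDelta (hk : k ∈ Ioo (0 : ℝ) 1) :
    Continuous fun φ => 1 / jacobiDelta k φ :=
  continuous_const.div continuous_jacobiDelta fun φ => (jacobiDelta_pos hk φ).ne'

lemma hasDerivAt_ellipticF (hk : k ∈ Ioo (0 : ℝ) 1) (φ : ℝ) :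
    HasDerivAt (ellipticF k) (1 / jacobiDelta k φ) φ :=
  (continuous_inv_jacobiDelta hk).integral_hasStrictDerivAt 0 φ |>.hasDerivAt

lemma continuous_ellipticF (hk : k ∈ Ioo (0 : ℝ) 1) : Continuous (ellipticF k) :=
  continuous_iff_continuousAt.2 fun φ => (hasDerivAt_ellipticF hk φ).continuousAt

@[simp]
lemma ellipticF_zero : ellipticF k 0 = 0 := intervalIntegral.integral_same

lemma ellipticF_pi_div_two : ellipticF k (π / 2) = Kell k := rfl

lemma jacobiDelta_neg (φ : ℝ) : jacobiDelta k (-φ) = jacobiDelta k φ := by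
  simp [jacobiDelta]

lemma jacobiDelta_add_pi (φ : ℝ) : jacobiDelta k (φ + π) = jacobiDelta k φ := by
  simp [jacobiDelta, sin_add_pi]

lemma ellipticF_neg (φ : ℝ) : ellipticF k (-φ) = -ellipticF k φ := by
  have h := intervalIntegral.integral_comp_neg (a := 0) (b := φ) fun u => 1 / jacobiDelta k u
  simp only [jacobiDelta_neg, neg_zero] at h
  rw [ellipticF, ellipticF, h, intervalIntegral.integral_symm]

lemma ellipticF_add_pi (hk : k ∈ Ioo (0 : ℝ) 1) (φ : ℝ) :
    ellipticF k (φ + π) = ellipticF k φ + 2 * Kell k := by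
  have hd : ∀ u, HasDerivAt (fun u => ellipticF k (u + π) - ellipticF k u) 0 u := fun u => by
    refine (((hasDerivAt_ellipticF hk (u + π)).comp_add_const u π).sub
      (hasDerivAt_ellipticF hk u)).congr_deriv ?_
    rw [jacobiDelta_add_pi, sub_self]
  have h := is_const_of_deriv_eq_zero (fun u => (hd u).differentiableAt) (fun u => (hd u).deriv)
    φ (-(π / 2))
  simp only [ellipticF_neg, ellipticF_pi_div_two] at h
  rw [show -(π / 2) + π = π / 2 by ring, ellipticF_pi_div_two] at h
  linarith

lemma ellipticF_add_nat_mul_pi (hk : k ∈ Ioo (0 : ℝ) 1) (φ : ℝ) (j : ℕ) :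
    ellipticF k (φ + j * π) = ellipticF k φ + j * (2 * Kell k) := by
  induction j with
  | zero => simp
  | succ j ih =>
    push_cast
    rw [add_mul, one_mul, ← add_assoc, ellipticF_add_pi hk, ih]
    ring

lemma Kell_pos (hk : k ∈ Ioo (0 : ℝ) 1) : 0 < Kell k :=
  intervalIntegral.intervalIntegral_pos_of_pos
    ((continuous_inv_jacobiDelta hk).intervalIntegrable _ _)
    (fun φ => one_div_pos.2 (jacobiDelta_pos hk φ)) (by positivity)

end basic

section quarterPeriod

/-- The denominator `1 - dn² sn₁²` in the imaginary-argument addition formula for `cn`. -/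
noncomputable def cnDenom (k φ ψ : ℝ) : ℝ := cos ψ ^ 2 + k ^ 2 * sin φ ^ 2 * sin ψ ^ 2

/-- The real part of `cn (F(φ, k) + i F(ψ, k'))`. -/
noncomputable def cnRe (k φ ψ : ℝ) : ℝ := cos φ * cos ψ / cnDenom k φ ψ

/-- The imaginary part of `cn (F(φ, k) + i F(ψ, k'))`. -/
noncomputable def cnIm (k l φ ψ : ℝ) : ℝ :=
  -(sin φ * jacobiDelta k φ * sin ψ * jacobiDelta l ψ / cnDenom k φ ψ)

/-- The partial derivative of `cnRe` in `ψ`. -/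
noncomputable def cnReDeriv (k φ ψ : ℝ) : ℝ :=
  cos φ * sin ψ * (2 * cos ψ ^ 2 * jacobiDelta k φ ^ 2 - cnDenom k φ ψ) / cnDenom k φ ψ ^ 2

/-- The partial derivative of `cnIm` in `ψ`. -/
noncomputable def cnImDeriv (k l φ ψ : ℝ) : ℝ :=
  -(sin φ * jacobiDelta k φ * cos ψ / jacobiDelta l ψ
    * (cnDenom k φ ψ + 2 * k ^ 2 * cos φ ^ 2 * sin ψ ^ 2) / cnDenom k φ ψ ^ 2)

variable {k l : ℝ}

lemma cnDenom_pos {ψ : ℝ} (hψ : ψ ∈ Ioo (-(π / 2)) (π / 2)) (φ : ℝ) : 0 < cnDenom k φ ψ := by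
  have := cos_pos_of_mem_Ioo hψ
  unfold cnDenom
  positivity

lemma hasDerivAt_cnDenom_right (φ ψ : ℝ) : HasDerivAt (cnDenom k φ)
    (2 * k ^ 2 * sin φ ^ 2 * sin ψ * cos ψ - 2 * sin ψ * cos ψ) ψ := by
  refine (((hasDerivAt_cos ψ).pow 2).add
    (((hasDerivAt_sin ψ).pow 2).const_mul (k ^ 2 * sin φ ^ 2))).congr_deriv ?_
  simp
  ring

lemma hasDerivAt_cnDenom_left (φ ψ : ℝ) : HasDerivAt (fun u => cnDenom k u ψ)
    (2 * k ^ 2 * sin φ * cos φ * sin ψ ^ 2) φ := by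
  refine (((((hasDerivAt_sin φ).pow 2).const_mul (k ^ 2)).mul_const (sin ψ ^ 2)).const_add
    (cos ψ ^ 2)).congr_deriv ?_
  norm_num only [Nat.cast_ofNat, pow_one]
  ring

lemma hasDerivAt_cnRe_right (hk : k ∈ Ioo (0 : ℝ) 1) {ψ : ℝ} (hψ : ψ ∈ Ioo (-(π / 2)) (π / 2))
    (φ : ℝ) : HasDerivAt (cnRe k φ) (cnReDeriv k φ ψ) ψ := by
  have hD := (cnDenom_pos (k := k) hψ φ).ne'
  refine (((hasDerivAt_cos ψ).const_mul (cos φ)).div (hasDerivAt_cnDenom_right φ ψ)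
    hD).congr_deriv ?_
  rw [cnReDeriv, jacobiDelta_sq hk]
  congr 1
  ring

lemma hasDerivAt_cnRe_left (hk : k ∈ Ioo (0 : ℝ) 1) (hl : l ∈ Ioo (0 : ℝ) 1) {ψ : ℝ}
    (hψ : ψ ∈ Ioo (-(π / 2)) (π / 2)) (φ : ℝ) : HasDerivAt (fun u => cnRe k u ψ)
      (jacobiDelta l ψ / jacobiDelta k φ * cnImDeriv k l φ ψ) φ := by
  have hD := (cnDenom_pos (k := k) hψ φ).ne'
  have hd := (jacobiDelta_pos hk φ).ne'
  have he := (jacobiDelta_pos hl ψ).ne'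
  refine (((hasDerivAt_cos φ).mul_const (cos ψ)).div (hasDerivAt_cnDenom_left φ ψ)
    hD).congr_deriv ?_
  rw [cnImDeriv]
  field_simp
  ring

lemma hasDerivAt_cnIm_left (hk : k ∈ Ioo (0 : ℝ) 1) {ψ : ℝ}
    (hψ : ψ ∈ Ioo (-(π / 2)) (π / 2)) (φ : ℝ) : HasDerivAt (fun u => cnIm k l u ψ)
      (-(jacobiDelta l ψ / jacobiDelta k φ * cnReDeriv k φ ψ)) φ := by
  have hD := (cnDenom_pos (k := k) hψ φ).ne'
  have hd := (jacobiDelta_pos hk φ).ne'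
  refine ((((((hasDerivAt_sin φ).mul (hasDerivAt_jacobiDelta hk φ)).mul_const (sin ψ)).mul_const
    (jacobiDelta l ψ)).div (hasDerivAt_cnDenom_left φ ψ) hD).neg).congr_deriv ?_
  rw [cnReDeriv]
  field_simp
  have h := jacobiDelta_sq hk φ
  have hD' : cnDenom k φ ψ = cos ψ ^ 2 + k ^ 2 * sin φ ^ 2 * sin ψ ^ 2 := rfl
  simp only [Pi.mul_apply]
  linear_combination (cos φ * sin ψ * jacobiDelta l ψ * cnDenom k φ ψ) * h
    - 2 * jacobiDelta k φ ^ 2 * cos φ * sin ψ * jacobiDelta l ψ * hD'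

lemma hasDerivAt_cnIm_right (hl : l ∈ Ioo (0 : ℝ) 1)
    (hkl : k ^ 2 + l ^ 2 = 1) {ψ : ℝ}
    (hψ : ψ ∈ Ioo (-(π / 2)) (π / 2)) (φ : ℝ) : HasDerivAt (cnIm k l φ)
      (cnImDeriv k l φ ψ) ψ := by
  have hD := (cnDenom_pos (k := k) hψ φ).ne'
  have he := (jacobiDelta_pos hl ψ).ne'
  refine ((((hasDerivAt_sin ψ).const_mul (sin φ * jacobiDelta k φ)).mul
    (hasDerivAt_jacobiDelta hl ψ)).div (hasDerivAt_cnDenom_right φ ψ) hD).neg.congr_deriv ?_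
  rw [cnImDeriv]
  field_simp
  have h' := jacobiDelta_sq hl ψ
  have hc := cos_sq' φ
  have hD' : cnDenom k φ ψ = cos ψ ^ 2 + k ^ 2 * sin φ ^ 2 * sin ψ ^ 2 := rfl
  simp only [Pi.mul_apply]
  linear_combination cos ψ * sin φ * jacobiDelta k φ *
    ((-2 * sin ψ ^ 2 * (1 - k ^ 2 * sin φ ^ 2) - cnDenom k φ ψ) * h'
      + 2 * sin ψ ^ 2 * (l ^ 2 * hD' + l ^ 2 * cos_sq' ψ + k ^ 2 * hc + hkl))

lemma hasDerivAt_integral_of_continuousOn {f f' : ℝ → ℝ → ℝ} {a b u v x₀ : ℝ}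
    (hx₀ : x₀ ∈ Ioo u v) (hf : ∀ x ∈ Ioo u v, Continuous (f x))
    (hf' : ContinuousOn (fun p : ℝ × ℝ => f' p.1 p.2) (Ioo u v ×ˢ univ))
    (hd : ∀ x ∈ Ioo u v, ∀ t, HasDerivAt (fun x => f x t) (f' x t) x) :
    HasDerivAt (fun x => ∫ t in a..b, f x t) (∫ t in a..b, f' x₀ t) x₀ := by
  obtain ⟨c, hc₁, hc₂⟩ := exists_between hx₀.1
  obtain ⟨d, hd₁, hd₂⟩ := exists_between hx₀.2
  have hsub : Icc c d ⊆ Ioo u v := fun x hx => ⟨hc₁.trans_le hx.1, hx.2.trans_lt hd₂⟩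
  obtain ⟨M, hM⟩ := (isCompact_Icc.prod isCompact_uIcc).exists_bound_of_continuousOn
    (hf'.mono (prod_mono hsub (subset_univ (uIcc a b))))
  have hcont : Continuous (f' x₀) := by
    rw [← continuousOn_univ]
    exact hf'.comp (f := fun t => (x₀, t)) (by fun_prop) fun t _ => ⟨hx₀, mem_univ t⟩
  refine (intervalIntegral.hasDerivAt_integral_of_dominated_loc_of_deriv_le
    (bound := fun _ => M) (F' := f') (Icc_mem_nhds hc₂ hd₁) ?_ ((hf x₀ hx₀).intervalIntegrable _ _)
    hcont.aestronglyMeasurable ?_ intervalIntegrable_const ?_).2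
  · filter_upwards [Ioo_mem_nhds hx₀.1 hx₀.2] with x hx using (hf x hx).aestronglyMeasurable
  · exact .of_forall fun t ht x hx => hM (x, t) ⟨hx, uIoc_subset_uIcc ht⟩
  · exact .of_forall fun t _ x hx => hd x (hsub hx) t

@[fun_prop]
lemma continuous_uncurry_cnDenom : Continuous fun p : ℝ × ℝ => cnDenom k p.1 p.2 := by
  unfold cnDenom; fun_prop

lemma continuous_cnRe_left {ψ : ℝ} (hψ : ψ ∈ Ioo (-(π / 2)) (π / 2)) :
    Continuous fun φ => cnRe k φ ψ := by
  unfold cnRe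
  exact .div (by fun_prop) (by fun_prop) fun φ => (cnDenom_pos hψ φ).ne'

lemma continuous_cnIm_left {ψ : ℝ} (hψ : ψ ∈ Ioo (-(π / 2)) (π / 2)) :
    Continuous fun φ => cnIm k l φ ψ := by
  unfold cnIm
  exact (Continuous.div (by fun_prop) (by fun_prop)
    fun φ => (cnDenom_pos hψ φ).ne').neg

lemma continuousOn_cnReDeriv : ContinuousOn (fun p : ℝ × ℝ => cnReDeriv k p.2 p.1)
    (Ioo (-(π / 2)) (π / 2) ×ˢ univ) := by
  unfold cnReDeriv
  exact ContinuousOn.div (by fun_prop) (by fun_prop)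
    fun p hp => pow_ne_zero 2 (cnDenom_pos hp.1 p.2).ne'

lemma continuousOn_cnImDeriv (hl : l ∈ Ioo (0 : ℝ) 1) :
    ContinuousOn (fun p : ℝ × ℝ => cnImDeriv k l p.2 p.1) (Ioo (-(π / 2)) (π / 2) ×ˢ univ) := by
  unfold cnImDeriv
  refine (ContinuousOn.div (.mul (.div (by fun_prop) (by fun_prop)
    fun p _ => (jacobiDelta_pos hl p.1).ne') (by fun_prop)) (by fun_prop)
    fun p hp => pow_ne_zero 2 (cnDenom_pos hp.1 p.2).ne').neg

/-- The `ω`-cosine moment of `Re cn` along a horizontal quarter period. -/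
noncomputable def cosMoment (k ω ψ : ℝ) : ℝ :=
  ∫ φ in (0 : ℝ)..(π / 2), cnRe k φ ψ * (cos (ω * ellipticF k φ) / jacobiDelta k φ)

/-- The `ω`-sine moment of `Im cn` along a horizontal quarter period. -/
noncomputable def sinMoment (k l ω ψ : ℝ) : ℝ :=
  ∫ φ in (0 : ℝ)..(π / 2), cnIm k l φ ψ * (sin (ω * ellipticF k φ) / jacobiDelta k φ)

lemma continuous_cos_div (hk : k ∈ Ioo (0 : ℝ) 1) (ω : ℝ) :
    Continuous fun φ => cos (ω * ellipticF k φ) / jacobiDelta k φ :=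
  have := continuous_ellipticF hk
  .div (by fun_prop) (by fun_prop) fun φ => (jacobiDelta_pos hk φ).ne'

lemma continuous_sin_div (hk : k ∈ Ioo (0 : ℝ) 1) (ω : ℝ) :
    Continuous fun φ => sin (ω * ellipticF k φ) / jacobiDelta k φ :=
  have := continuous_ellipticF hk
  .div (by fun_prop) (by fun_prop) fun φ => (jacobiDelta_pos hk φ).ne'

lemma hasDerivAt_cosMoment (hk : k ∈ Ioo (0 : ℝ) 1) (hl : l ∈ Ioo (0 : ℝ) 1) {ω : ℝ}
    (hω : cos (ω * Kell k) = 0) {ψ : ℝ} (hψ : ψ ∈ Ioo (-(π / 2)) (π / 2)) :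
    HasDerivAt (cosMoment k ω) (-(ω / jacobiDelta l ψ * sinMoment k l ω ψ)) ψ := by
  have he := (jacobiDelta_pos hl ψ).ne'
  have hcos := continuous_cos_div hk ω
  have hsin := continuous_sin_div hk ω
  have hR : Continuous fun φ => cnReDeriv k φ ψ := by
    rw [← continuousOn_univ]
    exact continuousOn_cnReDeriv.comp (f := fun φ => (ψ, φ)) (by fun_prop)
      fun φ _ => ⟨hψ, mem_univ φ⟩
  have hQ := continuous_cnIm_left (k := k) (l := l) hψ
  refine (hasDerivAt_integral_of_continuousOn
    (f' := fun ψ φ => cnReDeriv k φ ψ * (cos (ω * ellipticF k φ) / jacobiDelta k φ)) hψ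
    (fun ψ hψ => (continuous_cnRe_left hψ).mul hcos)
    (continuousOn_cnReDeriv.mul (hcos.comp continuous_snd).continuousOn)
    fun ψ hψ φ => (hasDerivAt_cnRe_right hk hψ φ).mul_const _).congr_deriv ?_
  have hint := intervalIntegral.integral_eq_sub_of_hasDerivAt (a := 0) (b := π / 2)
    (f := fun φ => cnIm k l φ ψ * cos (ω * ellipticF k φ))
    (f' := fun φ => -jacobiDelta l ψ * (cnReDeriv k φ ψ *
        (cos (ω * ellipticF k φ) / jacobiDelta k φ))
      - ω * (cnIm k l φ ψ * (sin (ω * ellipticF k φ) / jacobiDelta k φ)))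
    (fun φ _ => ((hasDerivAt_cnIm_left hk hψ φ).mul
      ((hasDerivAt_ellipticF hk φ).const_mul ω).cos).congr_deriv (by ring))
    (Continuous.intervalIntegrable (by fun_prop) _ _)
  rw [intervalIntegral.integral_sub (Continuous.intervalIntegrable (by fun_prop) _ _)
    (Continuous.intervalIntegrable (by fun_prop) _ _), intervalIntegral.integral_const_mul,
    intervalIntegral.integral_const_mul, ellipticF_pi_div_two, hω] at hint
  rw [show cnIm k l 0 ψ = 0 by simp [cnIm], ← sinMoment] at hint
  generalize (∫ φ in (0 : ℝ)..(π / 2), cnReDeriv k φ ψ * _) = I at hint ⊢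
  field_simp
  linarith

lemma hasDerivAt_sinMoment (hk : k ∈ Ioo (0 : ℝ) 1) (hl : l ∈ Ioo (0 : ℝ) 1)
    (hkl : k ^ 2 + l ^ 2 = 1) (ω : ℝ) {ψ : ℝ} (hψ : ψ ∈ Ioo (-(π / 2)) (π / 2)) :
    HasDerivAt (sinMoment k l ω) (-(ω / jacobiDelta l ψ * cosMoment k ω ψ)) ψ := by
  have he := (jacobiDelta_pos hl ψ).ne'
  have hcos := continuous_cos_div hk ω
  have hsin := continuous_sin_div hk ω
  have hT : Continuous fun φ => cnImDeriv k l φ ψ := by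
    rw [← continuousOn_univ]
    exact (continuousOn_cnImDeriv hl).comp (f := fun φ => (ψ, φ)) (by fun_prop)
      fun φ _ => ⟨hψ, mem_univ φ⟩
  have hP := continuous_cnRe_left (k := k) hψ
  refine (hasDerivAt_integral_of_continuousOn
    (f' := fun ψ φ => cnImDeriv k l φ ψ * (sin (ω * ellipticF k φ) / jacobiDelta k φ)) hψ
    (fun ψ hψ => (continuous_cnIm_left hψ).mul hsin)
    ((continuousOn_cnImDeriv hl).mul (hsin.comp continuous_snd).continuousOn)
    fun ψ hψ φ => (hasDerivAt_cnIm_right hl hkl hψ φ).mul_const _).congr_deriv ?_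
  have hint := intervalIntegral.integral_eq_sub_of_hasDerivAt (a := 0) (b := π / 2)
    (f := fun φ => cnRe k φ ψ * sin (ω * ellipticF k φ))
    (f' := fun φ => jacobiDelta l ψ * (cnImDeriv k l φ ψ *
        (sin (ω * ellipticF k φ) / jacobiDelta k φ))
      + ω * (cnRe k φ ψ * (cos (ω * ellipticF k φ) / jacobiDelta k φ)))
    (fun φ _ => ((hasDerivAt_cnRe_left hk hl hψ φ).mul
      ((hasDerivAt_ellipticF hk φ).const_mul ω).sin).congr_deriv (by ring))
    (Continuous.intervalIntegrable (by fun_prop) _ _)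
  rw [intervalIntegral.integral_add (Continuous.intervalIntegrable (by fun_prop) _ _)
    (Continuous.intervalIntegrable (by fun_prop) _ _), intervalIntegral.integral_const_mul,
    intervalIntegral.integral_const_mul] at hint
  rw [show cnRe k (π / 2) ψ = 0 by simp [cnRe], ellipticF_zero, mul_zero, sin_zero,
    ← cosMoment] at hint
  generalize (∫ φ in (0 : ℝ)..(π / 2), cnImDeriv k l φ ψ * _) = I at hint ⊢
  field_simp
  linarith

lemma sinMoment_zero (ω : ℝ) : sinMoment k l ω 0 = 0 := by
  simp [sinMoment, cnIm]

lemma cosMoment_zero (ω : ℝ) : cosMoment k ω 0 =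
    ∫ φ in (0 : ℝ)..(π / 2), cos φ * (cos (ω * ellipticF k φ) / jacobiDelta k φ) := by
  simp [cosMoment, cnRe, cnDenom]

lemma cosMoment_eq (hk : k ∈ Ioo (0 : ℝ) 1) (hl : l ∈ Ioo (0 : ℝ) 1)
    (hkl : k ^ 2 + l ^ 2 = 1) {ω : ℝ} (hω : cos (ω * Kell k) = 0) {ψ : ℝ}
    (hψ : ψ ∈ Ioo (-(π / 2)) (π / 2)) :
    cosMoment k ω ψ = cosMoment k ω 0 * cosh (ω * ellipticF l ψ) := by
  have h0 : (0 : ℝ) ∈ Ioo (-(π / 2)) (π / 2) := by constructor <;> linarith [pi_pos]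
  have hconst {H : ℝ → ℝ} (hH : ∀ u ∈ Ioo (-(π / 2)) (π / 2), HasDerivAt H 0 u) : H ψ = H 0 :=
    isOpen_Ioo.is_const_of_deriv_eq_zero isPreconnected_Ioo
      (fun u hu => (hH u hu).differentiableAt.differentiableWithinAt)
      (fun u hu => (hH u hu).deriv) hψ h0
  have h1 := hconst (H := fun u => cosMoment k ω u * cosh (ω * ellipticF l u)
      + sinMoment k l ω u * sinh (ω * ellipticF l u)) fun u hu =>
    (((hasDerivAt_cosMoment hk hl hω hu).mul ((hasDerivAt_ellipticF hl u).const_mul ω).cosh).add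
      ((hasDerivAt_sinMoment hk hl hkl ω hu).mul
        ((hasDerivAt_ellipticF hl u).const_mul ω).sinh)).congr_deriv (by ring)
  have h2 := hconst (H := fun u => cosMoment k ω u * sinh (ω * ellipticF l u)
      + sinMoment k l ω u * cosh (ω * ellipticF l u)) fun u hu =>
    (((hasDerivAt_cosMoment hk hl hω hu).mul ((hasDerivAt_ellipticF hl u).const_mul ω).sinh).add
      ((hasDerivAt_sinMoment hk hl hkl ω hu).mul
        ((hasDerivAt_ellipticF hl u).const_mul ω).cosh)).congr_deriv (by ring)
  simp only [ellipticF_zero, mul_zero, cosh_zero, sinh_zero, sinMoment_zero] at h1 h2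
  linear_combination cosh (ω * ellipticF l ψ) * h1 - sinh (ω * ellipticF l ψ) * h2
    - cosMoment k ω ψ * cosh_sq_sub_sinh_sq (ω * ellipticF l ψ)

end quarterPeriod

section peak

variable {k : ℝ}

lemma exists_abs_cos_div_sub_one_le (hk : k ∈ Ioo (0 : ℝ) 1) (ω : ℝ) :
    ∃ M, 0 ≤ M ∧ ∀ φ ∈ Icc 0 (π / 2),
      |cos (ω * ellipticF k φ) / jacobiDelta k φ - 1| ≤ M * sin φ := by
  have hF := continuous_ellipticF hk
  have hd : ∀ φ, HasDerivAt (fun φ => cos (ω * ellipticF k φ) / jacobiDelta k φ)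
      ((-sin (ω * ellipticF k φ) * (ω * (1 / jacobiDelta k φ)) * jacobiDelta k φ
        - cos (ω * ellipticF k φ) * -(k ^ 2 * sin φ * cos φ / jacobiDelta k φ))
          / jacobiDelta k φ ^ 2) φ := fun φ =>
    ((hasDerivAt_ellipticF hk φ).const_mul ω).cos.div (hasDerivAt_jacobiDelta hk φ)
      (jacobiDelta_pos hk φ).ne'
  have hne : ∀ φ, jacobiDelta k φ ≠ 0 := fun φ => (jacobiDelta_pos hk φ).ne'
  have hc : Continuous fun φ => (-sin (ω * ellipticF k φ) * (ω * (1 / jacobiDelta k φ))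
        * jacobiDelta k φ
      - cos (ω * ellipticF k φ) * -(k ^ 2 * sin φ * cos φ / jacobiDelta k φ))
        / jacobiDelta k φ ^ 2 := by
    fun_prop (disch := simp [hne])
  obtain ⟨M, hM⟩ := isCompact_Icc.exists_bound_of_continuousOn
    (hc.continuousOn (s := Icc 0 (π / 2)))
  have h0 : (0 : ℝ) ∈ Icc 0 (π / 2) := ⟨le_rfl, by positivity⟩
  have hM0 : 0 ≤ M := (norm_nonneg _).trans (hM 0 h0)
  refine ⟨M * (π / 2), by positivity, fun φ hφ => ?_⟩
  have h := (convex_Icc 0 (π / 2)).norm_image_sub_le_of_norm_hasDerivWithin_le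
    (fun u _ => (hd u).hasDerivWithinAt) hM h0 hφ
  have h1 : jacobiDelta k 0 = 1 := by simp [jacobiDelta]
  simp only [ellipticF_zero, mul_zero, cos_zero, h1, div_one, norm_eq_abs, sub_zero,
    abs_of_nonneg hφ.1] at h
  refine h.trans ?_
  have hj := mul_le_sin hφ.1 hφ.2
  rw [mul_assoc]
  gcongr
  calc φ = π / 2 * (2 / π * φ) := by field_simp
    _ ≤ π / 2 * sin φ := by gcongr

lemma integral_cnRe (hk : 0 < k) {ψ : ℝ} (hψ : ψ ∈ Ioo 0 (π / 2)) :
    ∫ φ in (0 : ℝ)..(π / 2), cnRe k φ ψ = arctan (k * tan ψ) / (k * sin ψ) := by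
  have hψ' : ψ ∈ Ioo (-(π / 2)) (π / 2) := ⟨by linarith [hψ.1, pi_pos], hψ.2⟩
  have hc := (cos_pos_of_mem_Ioo hψ').ne'
  have hs := (sin_pos_of_pos_of_lt_pi hψ.1 (by linarith [hψ.2, pi_pos])).ne'
  rw [intervalIntegral.integral_eq_sub_of_hasDerivAt
    (f := fun φ => arctan (k * tan ψ * sin φ) / (k * sin ψ))
    (fun φ _ => (((hasDerivAt_sin φ).const_mul (k * tan ψ)).arctan.div_const
      (k * sin ψ)).congr_deriv ?_) ((continuous_cnRe_left hψ').intervalIntegrable _ _)]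
  · simp
  · have hD := (cnDenom_pos (k := k) hψ' φ).ne'
    have h1 : 1 + (k * tan ψ * sin φ) ^ 2 = cnDenom k φ ψ / cos ψ ^ 2 := by
      rw [tan_eq_sin_div_cos, cnDenom]
      field_simp
    rw [h1, cnRe, tan_eq_sin_div_cos]
    field_simp

lemma tendsto_cosMoment (hk : k ∈ Ioo (0 : ℝ) 1) (ω : ℝ) :
    Tendsto (cosMoment k ω) (𝓝[<] (π / 2)) (𝓝 (π / (2 * k))) := by
  obtain ⟨M, hM0, hM⟩ := exists_abs_cos_div_sub_one_le hk ω
  have hk0 := hk.1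
  have hcos := continuous_cos_div hk ω
  have hev : ∀ᶠ ψ in 𝓝[<] (π / 2), ψ ∈ Ioo 0 (π / 2) := Ioo_mem_nhdsLT (by positivity)
  have hmem {ψ : ℝ} (hψ : ψ ∈ Ioo 0 (π / 2)) : ψ ∈ Ioo (-(π / 2)) (π / 2) :=
    ⟨by linarith [hψ.1, pi_pos], hψ.2⟩
  have hmain : Tendsto (fun ψ => arctan (k * tan ψ) / (k * sin ψ)) (𝓝[<] (π / 2))
      (𝓝 (π / 2 / (k * 1))) :=
    ((tendsto_arctan_atTop.mono_right nhdsWithin_le_nhds).comp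
      (tendsto_tan_pi_div_two.const_mul_atTop hk0)).div (tendsto_sin_pi_div_two.const_mul k)
      (by simpa using hk0.ne')
  have hrest : Tendsto (fun ψ => ∫ φ in (0 : ℝ)..(π / 2), cnRe k φ ψ *
      (cos (ω * ellipticF k φ) / jacobiDelta k φ - 1)) (𝓝[<] (π / 2))
      (𝓝 (∫ _ in (0 : ℝ)..(π / 2), 0)) := by
    refine intervalIntegral.tendsto_integral_filter_of_dominated_convergence (fun _ => M / k)
      ?_ ?_ intervalIntegrable_const ?_
    · filter_upwards [hev] with ψ hψ
      exact ((continuous_cnRe_left (hmem hψ)).mul (hcos.sub continuous_const)).aestronglyMeasurable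
    · have hs : ∀ᶠ ψ in 𝓝[<] (π / 2), 1 / 2 < sin ψ :=
        tendsto_sin_pi_div_two.eventually_const_lt (by norm_num)
      filter_upwards [hev, hs] with ψ hψ hsψ
      refine .of_forall fun φ hφ => ?_
      rw [uIoc_of_le (by positivity)] at hφ
      have hc := cos_pos_of_mem_Ioo (hmem hψ)
      have hD := cnDenom_pos (k := k) (hmem hψ) φ
      have hsφ : 0 ≤ sin φ := sin_nonneg_of_nonneg_of_le_pi hφ.1.le (by linarith [hφ.2, pi_pos])
      have hcφ : 0 ≤ cos φ := cos_nonneg_of_mem_Icc ⟨by linarith [hφ.1, pi_pos], hφ.2⟩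
      have hP : 0 ≤ cnRe k φ ψ := by unfold cnRe; positivity
      have hle : cnRe k φ ψ * sin φ ≤ 1 / k := by
        rw [cnRe, div_mul_eq_mul_div, div_le_div_iff₀ hD hk0]
        have h1 : 2 * (cos ψ * (k * sin φ * sin ψ)) ≤ cnDenom k φ ψ := by
          unfold cnDenom; nlinarith [sq_nonneg (cos ψ - k * sin φ * sin ψ)]
        have h2 : cos ψ * (k * sin φ) * 1 ≤ cos ψ * (k * sin φ) * (2 * sin ψ) := by
          gcongr; linarith
        have h3 : cos φ * (cos ψ * (k * sin φ)) ≤ 1 * (cos ψ * (k * sin φ)) := by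
          gcongr; exact cos_le_one φ
        linarith
      rw [norm_mul, norm_eq_abs, norm_eq_abs, abs_of_nonneg hP]
      calc _ ≤ cnRe k φ ψ * (M * sin φ) := by gcongr; exact hM φ ⟨hφ.1.le, hφ.2⟩
        _ = M * (cnRe k φ ψ * sin φ) := by ring
        _ ≤ M * (1 / k) := by gcongr
        _ = M / k := by ring
    · refine .of_forall fun φ hφ => ?_
      rw [uIoc_of_le (by positivity)] at hφ
      have hsφ : 0 < sin φ := sin_pos_of_pos_of_lt_pi hφ.1 (by linarith [hφ.2, pi_pos])
      have hcont : ContinuousAt (cnRe k φ) (π / 2) := by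
        unfold cnRe
        refine ContinuousAt.div (by fun_prop) (by fun_prop) ?_
        simp only [cnDenom, cos_pi_div_two, sin_pi_div_two]
        positivity
      have h := (hcont.tendsto.mono_left (nhdsWithin_le_nhds (s := Iio (π / 2)))).mul_const
        (cos (ω * ellipticF k φ) / jacobiDelta k φ - 1)
      simpa [cnRe] using h
  have hsum := hmain.add hrest
  rw [intervalIntegral.integral_zero, add_zero, mul_one, div_div] at hsum
  refine hsum.congr' ?_
  filter_upwards [hev] with ψ hψ
  have hP := continuous_cnRe_left (k := k) (hmem hψ)
  rw [← integral_cnRe hk0 hψ, ← intervalIntegral.integral_add (hP.intervalIntegrable _ _)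
    (Continuous.intervalIntegrable (by fun_prop) _ _), cosMoment]
  congr 1 with φ
  ring

/-- The quarter-period cosine integral of `cn`. -/
lemma integral_cos_mul_cos_ellipticF {l : ℝ} (hk : k ∈ Ioo (0 : ℝ) 1) (hl : l ∈ Ioo (0 : ℝ) 1)
    (hkl : k ^ 2 + l ^ 2 = 1) {ω : ℝ} (hω : cos (ω * Kell k) = 0) :
    ∫ φ in (0 : ℝ)..(π / 2), cos φ * (cos (ω * ellipticF k φ) / jacobiDelta k φ)
      = π / (2 * k) / cosh (ω * Kell l) := by
  have hF := continuous_ellipticF hl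
  have h1 : Tendsto (fun ψ => cosMoment k ω 0 * cosh (ω * ellipticF l ψ)) (𝓝[<] (π / 2))
      (𝓝 (cosMoment k ω 0 * cosh (ω * ellipticF l (π / 2)))) :=
    (Continuous.tendsto (by fun_prop) _).mono_left nhdsWithin_le_nhds
  have h2 := tendsto_nhds_unique_of_eventuallyEq (tendsto_cosMoment hk ω) h1 <| by
    filter_upwards [Ioo_mem_nhdsLT (show (0 : ℝ) < π / 2 by positivity)] with ψ hψ
    exact cosMoment_eq hk hl hkl hω ⟨by linarith [hψ.1, pi_pos], hψ.2⟩
  rw [← cosMoment_zero, h2, ellipticF_pi_div_two, mul_div_assoc, div_self (cosh_pos _).ne',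
    mul_one]

end peak

section periodic

variable {f : ℝ → ℝ}

lemma integral_nat_mul_pi (hf : Continuous f) (hp : Function.Periodic f π) (j : ℕ) :
    ∫ φ in (0 : ℝ)..(j * π), f φ = j * ∫ φ in (-(π / 2))..(π / 2), f φ := by
  have h := hp.intervalIntegral_add_zsmul_eq j 0 fun _ _ => hf.intervalIntegrable _ _
  have h' := hp.intervalIntegral_add_eq 0 (-(π / 2))
  rw [show -(π / 2) + π = π / 2 by ring] at h'
  rw [h'] at h
  simpa using h

lemma integral_nat_mul_pi_of_even (hf : Continuous f) (hp : Function.Periodic f π)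
    (he : ∀ φ, f (-φ) = f φ) (j : ℕ) :
    ∫ φ in (0 : ℝ)..(j * π), f φ = 2 * j * ∫ φ in (0 : ℝ)..(π / 2), f φ := by
  have h := intervalIntegral.integral_comp_neg (a := 0) (b := π / 2) f
  simp only [he, neg_zero] at h
  rw [integral_nat_mul_pi hf hp, ← intervalIntegral.integral_add_adjacent_intervals
    (hf.intervalIntegrable _ 0) (hf.intervalIntegrable _ _), ← h]
  ring

lemma integral_nat_mul_pi_of_odd (hf : Continuous f) (hp : Function.Periodic f π)
    (ho : ∀ φ, f (-φ) = -f φ) (j : ℕ) : ∫ φ in (0 : ℝ)..(j * π), f φ = 0 := by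
  have h := intervalIntegral.integral_comp_neg (a := 0) (b := π / 2) f
  simp only [ho, neg_zero, intervalIntegral.integral_neg] at h
  rw [integral_nat_mul_pi hf hp, ← intervalIntegral.integral_add_adjacent_intervals
    (hf.intervalIntegrable _ 0) (hf.intervalIntegrable _ _), ← h]
  ring

end periodic

section melnikov

variable {k : ℝ}

lemma integral_cos_sq_div_jacobiDelta (hk : k ∈ Ioo (0 : ℝ) 1) (n : ℕ) :
    ∫ φ in (0 : ℝ)..((2 * n : ℕ) * π), k ^ 2 * cos φ ^ 2 / jacobiDelta k φ
      = 4 * n * (Eell k - (1 - k ^ 2) * Kell k) := by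
  have hne : ∀ φ, jacobiDelta k φ ≠ 0 := fun φ => (jacobiDelta_pos hk φ).ne'
  rw [integral_nat_mul_pi_of_even (by fun_prop (disch := simp [hne]))
    (fun φ => by rw [jacobiDelta_add_pi, cos_add_pi, neg_sq])
    (fun φ => by rw [jacobiDelta_neg, cos_neg])]
  have h : ∀ φ, k ^ 2 * cos φ ^ 2 / jacobiDelta k φ
      = jacobiDelta k φ - (1 - k ^ 2) * (1 / jacobiDelta k φ) := fun φ => by
    have := hne φ
    field_simp
    rw [jacobiDelta_sq hk, cos_sq']
    ring
  simp only [h]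
  rw [intervalIntegral.integral_sub (continuous_jacobiDelta.intervalIntegrable _ _)
    (((continuous_inv_jacobiDelta hk).const_mul _).intervalIntegrable _ _),
    intervalIntegral.integral_const_mul]
  change 2 * ((2 * n : ℕ) : ℝ) * (Eell k - (1 - k ^ 2) * Kell k) = _
  push_cast
  ring

/-- The forcing term of the subharmonic Melnikov integral, in the amplitude variable. -/
noncomputable def forcingMoment (k ω T θ : ℝ) : ℝ :=
  ∫ φ in (0 : ℝ)..T, cos φ * (cos (ω * ellipticF k φ + θ) / jacobiDelta k φ)

lemma forcingMoment_eq (hk : k ∈ Ioo (0 : ℝ) 1) (ω T θ : ℝ) :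
    forcingMoment k ω T θ =
      cos θ * (∫ φ in (0 : ℝ)..T, cos φ * (cos (ω * ellipticF k φ) / jacobiDelta k φ))
      - sin θ * ∫ φ in (0 : ℝ)..T, cos φ * (sin (ω * ellipticF k φ) / jacobiDelta k φ) := by
  have hcos := continuous_cos_div hk ω
  have hsin := continuous_sin_div hk ω
  rw [← intervalIntegral.integral_const_mul, ← intervalIntegral.integral_const_mul,
    ← intervalIntegral.integral_sub (Continuous.intervalIntegrable (by fun_prop) _ _)
    (Continuous.intervalIntegrable (by fun_prop) _ _), forcingMoment]
  congr 1 with φ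
  rw [cos_add]
  ring

lemma forcingMoment_of_odd {l : ℝ} (hk : k ∈ Ioo (0 : ℝ) 1) (hl : l ∈ Ioo (0 : ℝ) 1)
    (hkl : k ^ 2 + l ^ 2 = 1) {ω : ℝ} {m : ℕ} (hm : Odd m) (hω : ω * (2 * Kell k) = m * π)
    (θ : ℝ) : forcingMoment k ω ((2 : ℕ) * π) θ = 2 * π / k / cosh (ω * Kell l) * cos θ := by
  have hcosc := continuous_cos_div hk ω
  have hsinc := continuous_sin_div hk ω
  obtain ⟨j, rfl⟩ := hm
  have harg : ∀ φ, ω * ellipticF k (φ + π) = ω * ellipticF k φ + π + j * (2 * π) := fun φ => by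
    rw [ellipticF_add_pi hk, mul_add, hω]; push_cast; ring
  have hK : cos (ω * Kell k) = 0 := by
    rw [show ω * Kell k = π / 2 + j * π by push_cast at hω; linarith, cos_add_nat_mul_pi]
    simp
  rw [forcingMoment_eq hk, integral_nat_mul_pi_of_even (by fun_prop)
    (fun φ => by
      rw [harg, jacobiDelta_add_pi, cos_add_pi, cos_add_nat_mul_two_pi, cos_add_pi]; ring)
    (fun φ => by rw [ellipticF_neg, jacobiDelta_neg, cos_neg, mul_neg, cos_neg]),
    integral_nat_mul_pi_of_odd (by fun_prop)
    (fun φ => by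
      rw [harg, jacobiDelta_add_pi, cos_add_pi, sin_add_nat_mul_two_pi, sin_add_pi]; ring)
    (fun φ => by rw [ellipticF_neg, jacobiDelta_neg, cos_neg, mul_neg, sin_neg]; ring),
    integral_cos_mul_cos_ellipticF hk hl hkl hK]
  have := hk.1.ne'
  push_cast
  field_simp
  ring

lemma forcingMoment_eq_zero (hk : k ∈ Ioo (0 : ℝ) 1) {ω : ℝ} {m n : ℕ} (hn : 0 < n)
    (hmn : m.Coprime n) (hω : ω * (2 * Kell k) = m * π / n) (h : ¬(n = 1 ∧ Odd m)) (θ : ℝ) :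
    forcingMoment k ω ((2 * n : ℕ) * π) θ = 0 := by
  have hn0 : (n : ℝ) ≠ 0 := by positivity
  have hshift : ∀ θ, forcingMoment k ω ((2 * n : ℕ) * π) θ
      = -forcingMoment k ω ((2 * n : ℕ) * π) (θ + m * π / n) := fun θ => by
    have hp : Function.Periodic
        (fun φ => cos φ * (cos (ω * ellipticF k φ + θ) / jacobiDelta k φ)) ((2 * n : ℕ) * π) := by
      intro φ
      have hd : jacobiDelta k (φ + (2 * n : ℕ) * π) = jacobiDelta k φ :=
        (Function.Periodic.nat_mul (jacobiDelta_add_pi (k := k)) (2 * n)) φ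
      have hc : cos (φ + (2 * n : ℕ) * π) = cos φ := by
        rw [← cos_add_nat_mul_two_pi φ n]; push_cast; ring_nf
      have ha : ω * ellipticF k (φ + (2 * n : ℕ) * π) + θ
          = ω * ellipticF k φ + θ + m * (2 * π) := by
        rw [ellipticF_add_nat_mul_pi hk]
        field_simp at hω
        push_cast
        linear_combination 2 * hω
      simp only [hd, hc, ha, cos_add_nat_mul_two_pi]
    have h1 := hp.intervalIntegral_add_eq 0 π
    have h2 := intervalIntegral.integral_comp_add_right (a := 0) (b := (2 * n : ℕ) * π)
      (fun φ => cos φ * (cos (ω * ellipticF k φ + θ) / jacobiDelta k φ)) π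
    rw [zero_add, add_comm] at h2
    rw [zero_add, ← h2] at h1
    rw [forcingMoment, h1, forcingMoment, ← intervalIntegral.integral_neg]
    congr 1 with φ
    rw [jacobiDelta_add_pi, cos_add_pi, ellipticF_add_pi hk, mul_add, hω,
      show ω * ellipticF k φ + m * π / n + θ = ω * ellipticF k φ + (θ + m * π / n) by ring]
    ring
  have h1 := hshift θ
  have h2 := hshift (θ - m * π / n)
  rw [sub_add_cancel] at h2
  rw [forcingMoment_eq hk _ _ (θ + _), cos_add, sin_add] at h1
  rw [forcingMoment_eq hk _ _ (θ - _), cos_sub, sin_sub] at h2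
  have h3 : (1 + cos (m * π / n)) * forcingMoment k ω ((2 * n : ℕ) * π) θ = 0 := by
    linear_combination (h1 + h2) / 2 +
      cos (m * π / n) * forcingMoment_eq hk ω ((2 * n : ℕ) * π) θ
  refine (mul_eq_zero.1 h3).resolve_left fun h4 => h ?_
  obtain ⟨j, hj⟩ := cos_eq_neg_one_iff.1 (show cos (m * π / n) = -1 by linarith)
  have h5 : (m : ℤ) = n * (2 * j + 1) := by
    have : (m : ℝ) = n * (2 * j + 1) := by
      field_simp at hj
      linarith
    exact_mod_cast this
  have h6 : n = 1 := Nat.dvd_one.1 <| hmn.gcd_eq_one ▸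
    Nat.dvd_gcd (Int.natCast_dvd_natCast.1 ⟨_, h5⟩) dvd_rfl
  subst h6
  refine ⟨rfl, ?_⟩
  rw [← Int.odd_coe_nat, h5]
  exact ⟨j, by simp⟩

lemma pendulum_snd_ellipticF (hk : k ∈ Ioo (0 : ℝ) 1) {x : ℝ → ℝ × ℝ} (hx0 : x 0 = (0, 2 * k))
    (hx1 : ∀ t : ℝ, HasDerivAt (fun s => (x s).1) ((x t).2) t)
    (hx2 : ∀ t : ℝ, HasDerivAt (fun s => (x s).2) (-sin ((x t).1)) t) (φ : ℝ) :
    (x (ellipticF k φ)).2 = 2 * k * cos φ := by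
  have hk2 : 0 < 1 - k ^ 2 := by nlinarith [hk.1, hk.2]
  have hsq : 0 < √(1 - k ^ 2) := sqrt_pos.2 hk2
  have hpos := jacobiDelta_pos hk
  have hle : ∀ φ, √(1 - k ^ 2) ≤ jacobiDelta k φ := fun φ =>
    sqrt_le_sqrt <| by nlinarith [sin_sq_le_one φ, sq_nonneg k]
  have hlip (φ : ℝ) : LipschitzOnWith (1 / √(1 - k ^ 2)).toNNReal
      (fun p : ℝ × ℝ => (p.2 * (1 / jacobiDelta k φ), -sin p.1 * (1 / jacobiDelta k φ))) univ := by
    refine LipschitzOnWith.of_dist_le_mul fun p _ q _ => ?_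
    have hd : 0 < 1 / jacobiDelta k φ := one_div_pos.2 (hpos φ)
    rw [Real.coe_toNNReal _ (by positivity), Prod.dist_eq, Prod.dist_eq]
    simp only [Real.dist_eq, ← sub_mul, abs_mul, abs_of_pos hd]
    refine max_le ?_ ?_
    · rw [mul_comm]
      gcongr
      exacts [hle φ, le_max_right _ _]
    · rw [mul_comm]
      gcongr
      · exact hle φ
      · rw [← neg_add', abs_neg, ← sub_eq_add_neg]
        exact (abs_sin_sub_sin_le _ _).trans (le_max_left _ _)
  have hmem : ∀ φ, -1 < k * sin φ ∧ k * sin φ < 1 := fun φ => by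
    rw [← abs_lt, ← sq_lt_one_iff_abs_lt_one, mul_pow]
    linarith [one_sub_pos hk φ]
  have heq := ODE_solution_unique_univ (t₀ := 0)
    (f := fun φ => x (ellipticF k φ))
    (g := fun φ => (2 * arcsin (k * sin φ), 2 * k * cos φ)) hlip
    (fun φ => ⟨HasDerivAt.prodMk
      ((hx1 (ellipticF k φ)).comp φ (hasDerivAt_ellipticF hk φ))
      ((hx2 (ellipticF k φ)).comp φ (hasDerivAt_ellipticF hk φ)), mem_univ _⟩)
    (fun φ => ⟨HasDerivAt.prodMk ?_ ?_, mem_univ _⟩) (by simp [hx0])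
  · exact congrArg Prod.snd (congrFun heq φ)
  · refine (((hasDerivAt_arcsin (hmem φ).1.ne' (hmem φ).2.ne).comp φ
      ((hasDerivAt_sin φ).const_mul k)).const_mul 2).congr_deriv ?_
    rw [mul_pow, ← jacobiDelta]
    ring
  · refine ((hasDerivAt_cos φ).const_mul (2 * k)).congr_deriv ?_
    rw [sin_two_mul, sin_arcsin (hmem φ).1.le (hmem φ).2.le, cos_arcsin, mul_pow, ← jacobiDelta]
    have := (hpos φ).ne'
    field_simp

end melnikov

/-- Let `k ∈ (0,1)`, `m, n` relatively prime positive integers with `ω = πm/(2nK(k))`.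
Then for all real `β, δ, θ`, the subharmonic Melnikov integral of the forced damped pendulum
along the periodic orbit `x^k` (the solution of `ẋ₁ = x₂`, `ẋ₂ = −sin x₁` with
`x^k(0) = (0, 2k)`) evaluates as
`∫₀^{2πm/ω} x^k₂(t)(β cos(ωt+θ) − δ x^k₂(t)) dt = −16nδ(E(k) − (1−k²)K(k)) + J₂ β cos θ`,
with `J₂ = 4π sech(ωK(k'))` if `n = 1` and `m` is odd, and `J₂ = 0` otherwise. -/
theorem stmt_13 (k : ℝ) (hk : k ∈ Set.Ioo (0 : ℝ) 1) (m n : ℕ) (hm : 0 < m) (hn : 0 < n)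
    (hmn : Nat.Coprime m n) (ω : ℝ) (hω : ω = π * m / (2 * n * Kell k))
    (x : ℝ → ℝ × ℝ) (hx0 : x 0 = (0, 2 * k))
    (hx1 : ∀ t : ℝ, HasDerivAt (fun s => (x s).1) ((x t).2) t)
    (hx2 : ∀ t : ℝ, HasDerivAt (fun s => (x s).2) (-Real.sin ((x t).1)) t)
    (β δ θ : ℝ) :
    ∫ t in (0 : ℝ)..(2 * π * m / ω), (x t).2 * (β * Real.cos (ω * t + θ) - δ * (x t).2)
      = -16 * n * δ * (Eell k - (1 - k ^ 2) * Kell k)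
        + (if n = 1 ∧ Odd m then 4 * π * (1 / Real.cosh (ω * Kell (Real.sqrt (1 - k ^ 2)))) else 0)
          * β * Real.cos θ := by
  have hK := Kell_pos hk
  have hk0 := hk.1
  have hk2 : 0 < 1 - k ^ 2 := by nlinarith [hk.1, hk.2]
  have hl2 : √(1 - k ^ 2) ^ 2 = 1 - k ^ 2 := sq_sqrt hk2.le
  have hl : √(1 - k ^ 2) ∈ Ioo (0 : ℝ) 1 :=
    ⟨sqrt_pos.2 hk2, sqrt_lt' one_pos |>.2 (by nlinarith)⟩
  have hωK : ω * (2 * Kell k) = m * π / n := by rw [hω]; field_simp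
  have hne : ∀ φ, jacobiDelta k φ ≠ 0 := fun φ => (jacobiDelta_pos hk φ).ne'
  have hF := continuous_ellipticF hk
  have hT : 2 * π * m / ω = ellipticF k ((2 * n : ℕ) * π) := by
    have := ellipticF_add_nat_mul_pi hk 0 (2 * n)
    rw [zero_add, ellipticF_zero, zero_add] at this
    rw [this, hω]
    push_cast
    field_simp
  have hcont : Continuous fun t => (x t).2 :=
    continuous_iff_continuousAt.2 fun t => (hx2 t).continuousAt
  have hsubst := intervalIntegral.integral_comp_mul_deriv (a := 0) (b := (2 * n : ℕ) * π)
    (fun φ _ => hasDerivAt_ellipticF hk φ) (continuous_inv_jacobiDelta hk).continuousOn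
    (g := fun t => (x t).2 * (β * cos (ω * t + θ) - δ * (x t).2)) (by fun_prop)
  rw [ellipticF_zero, ← hT] at hsubst
  have hsplit : ∀ φ, ((fun t => (x t).2 * (β * cos (ω * t + θ) - δ * (x t).2)) ∘ ellipticF k) φ
      * (1 / jacobiDelta k φ) = 2 * k * β * (cos φ * (cos (ω * ellipticF k φ + θ)
        / jacobiDelta k φ)) - 4 * δ * (k ^ 2 * cos φ ^ 2 / jacobiDelta k φ) := fun φ => by
    simp only [Function.comp_apply, pendulum_snd_ellipticF hk hx0 hx1 hx2]
    ring
  rw [← hsubst, intervalIntegral.integral_congr fun φ _ => hsplit φ,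
    intervalIntegral.integral_sub
      (Continuous.intervalIntegrable (by fun_prop (disch := simp [hne])) _ _)
      (Continuous.intervalIntegrable (by fun_prop (disch := simp [hne])) _ _),
    intervalIntegral.integral_const_mul, intervalIntegral.integral_const_mul,
    integral_cos_sq_div_jacobiDelta hk, ← forcingMoment]
  split_ifs with h
  · obtain ⟨rfl, hodd⟩ := h
    rw [mul_one 2, forcingMoment_of_odd hk hl (by rw [hl2]; ring) hodd (by simpa using hωK)]
    field_simp
    ring
  · rw [forcingMoment_eq_zero hk hn hmn hωK h]
    ring
end

section
/- Let k ∈ (0, 1) and k' = √(1 − k²). There exists a meromorphic function y on a domain of ℂ containing ℝ and the point iK(k') such that: y agrees on ℝ with the second component x^k₂ of the solution of ẋ₁ = x₂, ẋ₂ = −sin x₁ with x^k(0) = (0, 2k); y satisfies the algebraic differential equation (y')² = 1 − (1 − 2k² + y²/2)² wherever it is finite; y has a simple pole at t = iK(k') with residue −2i; and for all ω > 0, all real β, δ, θ, and all sufficiently small ρ > 0, the contour integral over the positively oriented circle |t − iK(k')| = ρ satisfies ∮ y(t)(β cos(ωt + θ) − δ y(t)) dt = 4πβ(cosh(ωK(k'))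 cos θ − i sinh(ωK(k')) sin θ); in particular this contour integral is nonzero for every θ whenever β > 0. -/
open Real Filter Topology

/-- Real functions `sn, cn, dn` obeying the differential system, the initial values and the
first integrals of the Jacobi elliptic functions of parameter `m`. -/
structure IsJacobiTriple (m : ℝ) (sn cn dn : ℝ → ℝ) : Prop where
  hasDerivAt_sn : ∀ t, HasDerivAt sn (cn t * dn t) t
  hasDerivAt_cn : ∀ t, HasDerivAt cn (-(sn t * dn t)) t
  hasDerivAt_dn : ∀ t, HasDerivAt dn (-(m * sn t * cn t)) t
  sn_zero : sn 0 = 0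
  cn_zero : cn 0 = 1
  dn_zero : dn 0 = 1
  cn_sq : ∀ t, cn t ^ 2 = 1 - sn t ^ 2
  dn_sq : ∀ t, dn t ^ 2 = 1 - m * sn t ^ 2

/-- A function whose derivative is everywhere at least one is a strictly increasing bijection,
and the inverse is differentiable. -/
theorem exists_inverse_of_one_le_deriv {F f : ℝ → ℝ} (hF : ∀ t, HasDerivAt F (f t) t)
    (hf : ∀ t, 1 ≤ f t) :
    ∃ a : ℝ → ℝ, StrictMono a ∧ (∀ t, a (F t) = t) ∧
      ∀ t, HasDerivAt a (f (a t))⁻¹ t := by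
  have hmono : StrictMono F := strictMono_of_deriv_pos fun t => by
    rw [(hF t).deriv]; linarith [hf t]
  have hcont : Continuous F := continuous_iff_continuousAt.2 fun t => (hF t).continuousAt
  have hsub : Monotone fun t => F t - t := by
    refine monotone_of_deriv_nonneg (fun t => ((hF t).sub (hasDerivAt_id t)).differentiableAt) ?_
    intro t
    have h := ((hF t).sub (hasDerivAt_id t)).deriv
    have : deriv (fun t => F t - t) t = f t - 1 := h
    rw [this]; linarith [hf t]
  have htop : Tendsto F atTop atTop := by
    refine tendsto_atTop_mono' atTop ?_ (tendsto_atTop_add_const_left atTop (F 0) tendsto_id)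
    filter_upwards [eventually_ge_atTop 0] with t ht
    have := hsub ht
    simp only [id] at *; linarith
  have hbot : Tendsto F atBot atBot := by
    refine tendsto_atBot_mono' atBot ?_ (tendsto_atBot_add_const_left atBot (F 0) tendsto_id)
    filter_upwards [eventually_le_atBot 0] with t ht
    have := hsub ht
    simp only [id] at *; linarith
  let e := hmono.orderIsoOfSurjective F (hcont.surjective htop hbot)
  have hright : ∀ t, F (e.symm t) = t := fun t => e.apply_symm_apply t
  refine ⟨e.symm, e.symm.strictMono, fun t => e.symm_apply_apply t, fun t => ?_⟩
  exact (hF _).of_local_left_inverse e.symm.continuous.continuousAt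
    (by linarith [hf (e.symm t)]) (Eventually.of_forall hright)

/-- Real Jacobi functions of modulus `κ`, by inversion of the elliptic integral; `cn` is positive
on an interval around `0` whose right end is its zero `Kell κ`. -/
theorem exists_isJacobiTriple {κ : ℝ} (hκ : κ ^ 2 < 1) :
    ∃ sn cn dn : ℝ → ℝ, IsJacobiTriple (κ ^ 2) sn cn dn ∧ 0 < Kell κ ∧
      cn (Kell κ) = 0 ∧ sn (Kell κ) = 1 ∧ 0 < dn (Kell κ) ∧
      ∃ l < 0, ∀ t ∈ Set.Ioo l (Kell κ), 0 < cn t := by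
  have hpos : ∀ φ, 0 < 1 - κ ^ 2 * sin φ ^ 2 := fun φ => by
    nlinarith [sin_sq_le_one φ, sq_nonneg (sin φ), sq_nonneg κ]
  have hsqrt : ∀ φ, 0 < √(1 - κ ^ 2 * sin φ ^ 2) := fun φ => Real.sqrt_pos.2 (hpos φ)
  have hcont : Continuous fun φ => 1 / √(1 - κ ^ 2 * sin φ ^ 2) :=
    continuous_const.div (by fun_prop) fun φ => (hsqrt φ).ne'
  have hF : ∀ φ, HasDerivAt (fun u => ∫ φ in (0 : ℝ)..u, 1 / √(1 - κ ^ 2 * sin φ ^ 2))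
      (1 / √(1 - κ ^ 2 * sin φ ^ 2)) φ := fun φ =>
    intervalIntegral.integral_hasDerivAt_right (hcont.intervalIntegrable _ _)
      (hcont.stronglyMeasurableAtFilter _ _) hcont.continuousAt
  obtain ⟨a, hmono, haF, ha⟩ := exists_inverse_of_one_le_deriv hF fun φ => by
    rw [le_div_iff₀ (hsqrt φ), one_mul]
    exact Real.sqrt_le_one.2 (by nlinarith [mul_nonneg (sq_nonneg κ) (sq_nonneg (sin φ))])
  simp only [one_div, inv_inv] at ha
  have ha0 : a 0 = 0 := by simpa using haF 0
  have haK : a (Kell κ) = π / 2 := haF (π / 2)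
  have hK : 0 < Kell κ := by
    rw [← hmono.lt_iff_lt, ha0, haK]; exact Real.pi_div_two_pos
  refine ⟨fun t => sin (a t), fun t => cos (a t), fun t => √(1 - κ ^ 2 * sin (a t) ^ 2),
    ⟨?_, ?_, ?_, ?_, ?_, ?_, ?_, ?_⟩, hK, ?_, ?_, hsqrt _, ?_⟩
  · exact fun t => (ha t).sin
  · exact fun t => by simpa using (ha t).cos
  · intro t
    have h := ((((ha t).sin.pow 2).const_mul (κ ^ 2)).const_sub 1).sqrt (hpos _).ne'
    refine h.congr_deriv ?_
    have := (hsqrt (a t)).ne'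
    simp only [Pi.pow_apply]
    field_simp
    simp only [Nat.cast_ofNat]
    ring
  · simp [ha0]
  · simp [ha0]
  · simp [ha0]
  · exact fun t => Real.cos_sq' _
  · exact fun t => Real.sq_sqrt (hpos _).le
  · simp [haK]
  · simp [haK]
  · refine ⟨∫ φ in (0 : ℝ)..(-(π / 2)), 1 / √(1 - κ ^ 2 * sin φ ^ 2), ?_, fun t ht => ?_⟩
    · rw [← hmono.lt_iff_lt, ha0, haF]
      linarith [Real.pi_pos]
    · refine Real.cos_pos_of_mem_Ioo ⟨?_, ?_⟩
      · have := hmono ht.1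
        rwa [haF] at this
      · have := hmono ht.2
        rwa [haK] at this

/-- The Jacobi functions read off from the pendulum orbit through `(0, 2k)`. -/
theorem isJacobiTriple_of_pendulum {k : ℝ} (hk : k ≠ 0) {x : ℝ → ℝ × ℝ} (hx0 : x 0 = (0, 2 * k))
    (hx1 : ∀ t : ℝ, HasDerivAt (fun s => (x s).1) ((x t).2) t)
    (hx2 : ∀ t : ℝ, HasDerivAt (fun s => (x s).2) (-Real.sin ((x t).1)) t) :
    IsJacobiTriple (k ^ 2) (fun t => sin ((x t).1 / 2) / k) (fun t => (x t).2 / (2 * k))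
      (fun t => cos ((x t).1 / 2)) := by
  have hdouble : ∀ t, sin (x t).1 = 2 * sin ((x t).1 / 2) * cos ((x t).1 / 2) := fun t => by
    rw [← Real.sin_two_mul]; congr 1; ring
  have hcos : ∀ t, cos (x t).1 = 1 - 2 * sin ((x t).1 / 2) ^ 2 := fun t => by
    rw [← Real.cos_sq_add_sin_sq ((x t).1 / 2)]
    have h := Real.cos_two_mul' ((x t).1 / 2)
    rw [mul_div_cancel₀ _ two_ne_zero] at h
    rw [h]; ring
  have henergy : ∀ t, (x t).2 ^ 2 / 2 - cos (x t).1 = 2 * k ^ 2 - 1 := by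
    have hd : ∀ t, HasDerivAt (fun s => (x s).2 ^ 2 / 2 - cos (x s).1) 0 t := fun t => by
      refine ((((hx2 t).pow 2).div_const 2).sub (hx1 t).cos).congr_deriv ?_
      simp only [Nat.cast_ofNat]; ring
    intro t
    have h := is_const_of_deriv_eq_zero (fun s => (hd s).differentiableAt)
      (fun s => (hd s).deriv) t 0
    simp only [hx0, Real.cos_zero] at h
    rw [h]; ring
  refine ⟨?_, ?_, ?_, ?_, ?_, ?_, ?_, ?_⟩
  · intro t
    refine ((((hx1 t).div_const 2).sin).div_const k).congr_deriv ?_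
    field_simp
  · intro t
    refine ((hx2 t).div_const (2 * k)).congr_deriv ?_
    rw [hdouble]; field_simp
  · intro t
    refine (((hx1 t).div_const 2).cos).congr_deriv ?_
    field_simp
  · simp [hx0]
  · simp [hx0, hk]
  · simp [hx0]
  · intro t
    have h1 := henergy t
    rw [hcos] at h1
    field_simp
    linarith
  · intro t
    rw [Real.cos_sq']; field_simp

/-- A simple pole with residue `-2i` of a solution of `(y')² = 1 - (A + y²/2)²` has vanishing
constant Laurent coefficient. -/
theorem exists_regular_part_of_ode {y : ℂ → ℂ} {p A : ℂ}
    (hlim : Tendsto (fun z => (z - p) * y z) (𝓝[≠] p) (𝓝 (-2 * Complex.I)))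
    (hode : ∀ᶠ z in 𝓝[≠] p, ∃ y', HasDerivAt y y' z ∧ y' ^ 2 = 1 - (A + y z ^ 2 / 2) ^ 2) :
    ∃ g : ℂ → ℂ, AnalyticAt ℂ g p ∧ g p = -2 * Complex.I ∧ HasDerivAt g 0 p ∧
      ∀ᶠ z in 𝓝[≠] p, y z = (z - p)⁻¹ * g z := by
  set g : ℂ → ℂ := Function.update (fun z => (z - p) * y z) p (-2 * Complex.I) with hg
  have hgp : g p = -2 * Complex.I := by simp [hg]
  have hgne : ∀ z, z ≠ p → g z = (z - p) * y z := fun z hz => by simp [hg, hz]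
  have hgev : ∀ z, z ≠ p → g =ᶠ[𝓝 z] fun z => (z - p) * y z := fun z hz => by
    filter_upwards [isOpen_ne.mem_nhds hz] with w hw using hgne w hw
  have hgd : ∀ z y', z ≠ p → HasDerivAt y y' z → HasDerivAt g (y z + (z - p) * y') z := by
    intro z y' hz hy
    refine HasDerivAt.congr_of_eventuallyEq ?_ (hgev z hz)
    exact (((hasDerivAt_id z).sub_const p).mul hy).congr_deriv (by simp)
  have hne : ∀ᶠ z in 𝓝[≠] p, z ≠ p := eventually_mem_nhdsWithin
  have hga : AnalyticAt ℂ g p := by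
    refine Complex.analyticAt_of_differentiable_on_punctured_nhds_of_continuousAt ?_
      (continuousAt_update_same.2 hlim)
    filter_upwards [hode, hne] with z ⟨y', hy, _⟩ hz using (hgd z y' hz hy).differentiableAt
  refine ⟨g, hga, hgp, ?_, ?_⟩
  · have hg1 := hga.differentiableAt.hasDerivAt
    have hg2 := hga.deriv.differentiableAt.hasDerivAt
    have hid : HasDerivAt (fun z => z - p) 1 p := (hasDerivAt_id p).sub_const p
    have hH := ((((hg2.mul hid).sub hg1).pow 2).add
      ((((hid.pow 2).const_mul A).add ((hg1.pow 2).div_const 2)).pow 2)).sub (hid.pow 4)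
    have hzero : ∀ᶠ z in 𝓝[≠] p, (deriv g z * (z - p) - g z) ^ 2
        + (A * (z - p) ^ 2 + g z ^ 2 / 2) ^ 2 - (z - p) ^ 4 = 0 := by
      filter_upwards [hode, hne] with z ⟨y', hy, hy2⟩ hz
      rw [(hgd z y' hz hy).deriv, hgne z hz]
      linear_combination (z - p) ^ 4 * hy2
    have hzero' : (fun z => (deriv g z * (z - p) - g z) ^ 2
        + (A * (z - p) ^ 2 + g z ^ 2 / 2) ^ 2 - (z - p) ^ 4) =ᶠ[𝓝 p] fun _ => 0 := by
      rw [Filter.EventuallyEq, ← nhdsNE_sup_pure, eventually_sup]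
      refine ⟨hzero, ?_⟩
      simp only [eventually_pure, hgp, sub_self]
      linear_combination (4 + 4 * Complex.I ^ 2 - 4) * Complex.I_sq
    have h0 := hH.unique ((hasDerivAt_const p (0 : ℂ)).congr_of_eventuallyEq hzero')
    simp [hgp] at h0
    rwa [h0] at hg1
  · filter_upwards [hne] with z hz
    rw [hgne z hz, inv_mul_cancel_left₀ (sub_ne_zero.2 hz)]

/-- The contour integral around a pole whose constant Laurent coefficient vanishes. -/
theorem circleIntegral_mul_sub_eq {y g u : ℂ → ℂ} {p : ℂ} (hg : AnalyticAt ℂ g p)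
    (hg' : HasDerivAt g 0 p) (hy : ∀ᶠ z in 𝓝[≠] p, y z = (z - p)⁻¹ * g z)
    (hu : Differentiable ℂ u) (δ : ℂ) :
    ∃ ρ₀ > 0, ∀ ρ ∈ Set.Ioo (0 : ℝ) ρ₀,
      (∮ z in C(p, ρ), y z * (u z - δ * y z)) = 2 * π * Complex.I * (g p * u p) := by
  have hev : ∀ᶠ z in 𝓝 p, AnalyticAt ℂ g z ∧ (z ≠ p → y z = (z - p)⁻¹ * g z) :=
    hg.eventually_analyticAt.and (eventually_nhdsWithin_iff.1 hy)
  obtain ⟨r, hr, hball⟩ := Metric.eventually_nhds_iff_ball.1 hev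
  refine ⟨r, hr, fun ρ hρ => ?_⟩
  set G : ℂ → ℂ := fun z => g z * ((z - p) * u z - δ * g z) with hG
  have hint : (∮ z in C(p, ρ), y z * (u z - δ * y z)) = ∮ z in C(p, ρ), ((z - p) ^ 2)⁻¹ • G z := by
    refine circleIntegral.integral_congr hρ.1.le fun z hz => ?_
    have hzp : z ≠ p := by
      rintro rfl; simp [hρ.1.ne] at hz
    have hzb : z ∈ Metric.ball p r := by
      rw [Metric.mem_ball, Metric.mem_sphere.1 hz]; exact hρ.2
    have hsub := sub_ne_zero.2 hzp
    simp only [hG, smul_eq_mul, (hball z hzb).2 hzp]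
    field_simp
  have hGd : DifferentiableOn ℂ G (Metric.ball p r) := fun z hz => by
    have h := (hball z hz).1.differentiableAt
    have hu' := hu z
    exact DifferentiableAt.differentiableWithinAt (by fun_prop)
  have hcauchy := Complex.two_pi_I_inv_smul_circleIntegral_sub_sq_inv_smul_of_differentiable
    Metric.isOpen_ball (Metric.closedBall_subset_ball hρ.2) hGd (Metric.mem_ball_self hρ.1)
  have hderiv : HasDerivAt G (g p * u p) p := by
    refine (hg'.mul ((((hasDerivAt_id p).sub_const p).mul (hu p).hasDerivAt).sub
      (hg'.const_mul δ))).congr_deriv ?_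
    simp
  rw [hderiv.deriv, inv_smul_eq_iff₀ Complex.two_pi_I_ne_zero] at hcauchy
  rw [hint, hcauchy, smul_eq_mul]

section AdditionFormulas

variable {R : Type*} [CommRing R] {S C D s c d k i : R}

theorem jacobi_cn_deriv_re (h1 : C ^ 2 = 1 - S ^ 2) (h2 : D ^ 2 = 1 - k ^ 2 * S ^ 2)
    (h3 : c ^ 2 = 1 - s ^ 2) (h4 : d ^ 2 = 1 - (1 - k ^ 2) * s ^ 2) (hi : i ^ 2 = -1) :
    (-(S * D * c) - i * s * d * C * (D ^ 2 - k ^ 2 * S ^ 2)) * (c ^ 2 + k ^ 2 * S ^ 2 * s ^ 2)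
        - (C * c - i * S * D * s * d) * (2 * k ^ 2 * S * C * D * s ^ 2)
      = -(S * d + i * C * D * s * c) * (D * c * d - i * k ^ 2 * S * C * s) := by
  grind

theorem jacobi_cn_deriv_im (h1 : C ^ 2 = 1 - S ^ 2) (h2 : D ^ 2 = 1 - k ^ 2 * S ^ 2)
    (h3 : c ^ 2 = 1 - s ^ 2) (h4 : d ^ 2 = 1 - (1 - k ^ 2) * s ^ 2) (hi : i ^ 2 = -1) :
    (-(C * s * d) - i * S * D * c * (d ^ 2 - (1 - k ^ 2) * s ^ 2))
          * (c ^ 2 + k ^ 2 * S ^ 2 * s ^ 2)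
        - (C * c - i * S * D * s * d) * (-2 * c * s * d + 2 * k ^ 2 * S ^ 2 * s * c * d)
      = -i * (S * d + i * C * D * s * c) * (D * c * d - i * k ^ 2 * S * C * s) := by
  grind

theorem jacobi_sn_sq_add_cn_sq (h1 : C ^ 2 = 1 - S ^ 2) (h2 : D ^ 2 = 1 - k ^ 2 * S ^ 2)
    (h3 : c ^ 2 = 1 - s ^ 2) (h4 : d ^ 2 = 1 - (1 - k ^ 2) * s ^ 2) (hi : i ^ 2 = -1) :
    (S * d + i * C * D * s * c) ^ 2 + (C * c - i * S * D * s * d) ^ 2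
      = (c ^ 2 + k ^ 2 * S ^ 2 * s ^ 2) ^ 2 := by
  grind

theorem jacobi_dn_sq_add_sn_sq (h1 : C ^ 2 = 1 - S ^ 2) (h2 : D ^ 2 = 1 - k ^ 2 * S ^ 2)
    (h3 : c ^ 2 = 1 - s ^ 2) (h4 : d ^ 2 = 1 - (1 - k ^ 2) * s ^ 2) (hi : i ^ 2 = -1) :
    (D * c * d - i * k ^ 2 * S * C * s) ^ 2 + k ^ 2 * (S * d + i * C * D * s * c) ^ 2
      = (c ^ 2 + k ^ 2 * S ^ 2 * s ^ 2) ^ 2 := by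
  grind

theorem jacobi_cn_mul_conj (h1 : C ^ 2 = 1 - S ^ 2) (h2 : D ^ 2 = 1 - k ^ 2 * S ^ 2)
    (h3 : c ^ 2 = 1 - s ^ 2) (h4 : d ^ 2 = 1 - (1 - k ^ 2) * s ^ 2) (hi : i ^ 2 = -1) :
    (C * c - i * S * D * s * d) * (C * c + i * S * D * s * d)
      = (c ^ 2 + k ^ 2 * S ^ 2 * s ^ 2) * (1 - S ^ 2 * d ^ 2) := by
  grind

end AdditionFormulas

theorem HasDerivAt.hasFDerivAt_comp_re {f : ℝ → ℝ} {f' : ℝ} {z : ℂ} (hf : HasDerivAt f f' z.re) :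
    HasFDerivAt (fun w : ℂ => (f w.re : ℂ))
      ((f' : ℂ) • (Complex.ofRealCLM ∘L Complex.reCLM)) z := by
  refine (hf.ofReal_comp.hasFDerivAt.comp z Complex.reCLM.hasFDerivAt).congr_fderiv ?_
  ext h
  simp [mul_comm]

theorem HasDerivAt.hasFDerivAt_comp_im {f : ℝ → ℝ} {f' : ℝ} {z : ℂ} (hf : HasDerivAt f f' z.im) :
    HasFDerivAt (fun w : ℂ => (f w.im : ℂ))
      ((f' : ℂ) • (Complex.ofRealCLM ∘L Complex.imCLM)) z := by
  refine (hf.ofReal_comp.hasFDerivAt.comp z Complex.imCLM.hasFDerivAt).congr_fderiv ?_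
  ext h
  simp [mul_comm]

/-- The Cauchy–Riemann criterion for a quotient of real-differentiable functions. -/
theorem hasDerivAt_div_of_hasFDerivAt {N Q : ℂ → ℂ} {N' Q' : ℂ →L[ℝ] ℂ} {z e : ℂ}
    (hN : HasFDerivAt N N' z) (hQ : HasFDerivAt Q Q' z) (hz : Q z ≠ 0)
    (h : ∀ w, N' w * Q z - N z * Q' w = e * Q z ^ 2 * w) :
    HasDerivAt (fun w => N w / Q w) e z := by
  have hinv := (hasDerivAt_inv hz).comp_hasFDerivAt z hQ
  have hmul := hN.mul hinv
  rw [hasDerivAt_iff_hasFDerivAt]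
  refine hasFDerivAt_of_restrictScalars ℝ (hmul.congr_of_eventuallyEq ?_) ?_
  · exact Eventually.of_forall fun w => div_eq_mul_inv _ _
  · ext w
    have := h w
    simp
    field_simp
    linear_combination -this

section ComplexArgument

variable {k : ℝ} {S C D s c d : ℝ → ℝ}

/-- The denominator in the addition formulas at the argument `z.re + i z.im`. -/
noncomputable def jacobiDen (k : ℝ) (S s c : ℝ → ℝ) (z : ℂ) : ℂ :=
  (c z.im : ℂ) ^ 2 + (k : ℂ) ^ 2 * (S z.re : ℂ) ^ 2 * (s z.im : ℂ) ^ 2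

/-- The numerator of `cn (z.re + i z.im)`. -/
noncomputable def jacobiCnNum (S C D s c d : ℝ → ℝ) (z : ℂ) : ℂ :=
  (C z.re : ℂ) * (c z.im : ℂ)
    - Complex.I * ((S z.re : ℂ) * (D z.re : ℂ) * ((s z.im : ℂ) * (d z.im : ℂ)))

/-- The numerator of `cn (z.re - i z.im)`. -/
noncomputable def jacobiCnNumConj (S C D s c d : ℝ → ℝ) (z : ℂ) : ℂ :=
  (C z.re : ℂ) * (c z.im : ℂ)
    + Complex.I * ((S z.re : ℂ) * (D z.re : ℂ) * ((s z.im : ℂ) * (d z.im : ℂ)))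

theorem hasDerivAt_jacobiCn (hJ : IsJacobiTriple (k ^ 2) S C D)
    (hj : IsJacobiTriple (1 - k ^ 2) s c d) {z : ℂ} (hz : jacobiDen k S s c z ≠ 0) :
    ∃ y', HasDerivAt (fun w => 2 * k * (jacobiCnNum S C D s c d w / jacobiDen k S s c w)) y' z ∧
      y' ^ 2 = 1 - (1 - 2 * (k : ℂ) ^ 2 +
        (2 * k * (jacobiCnNum S C D s c d z / jacobiDen k S s c z)) ^ 2 / 2) ^ 2 := by
  have hS := (hJ.hasDerivAt_sn z.re).hasFDerivAt_comp_re
  have hC := (hJ.hasDerivAt_cn z.re).hasFDerivAt_comp_re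
  have hD := (hJ.hasDerivAt_dn z.re).hasFDerivAt_comp_re
  have hs := (hj.hasDerivAt_sn z.im).hasFDerivAt_comp_im
  have hc := (hj.hasDerivAt_cn z.im).hasFDerivAt_comp_im
  have hd := (hj.hasDerivAt_dn z.im).hasFDerivAt_comp_im
  have hN : HasFDerivAt (jacobiCnNum S C D s c d) _ z :=
    (hC.mul hc).sub (((hS.mul hD).mul (hs.mul hd)).const_mul Complex.I)
  have hQ : HasFDerivAt (jacobiDen k S s c) _ z :=
    (hc.pow 2).add (((hS.pow 2).const_mul ((k : ℂ) ^ 2)).mul (hs.pow 2))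
  have h1 : (C z.re : ℂ) ^ 2 = 1 - (S z.re : ℂ) ^ 2 := mod_cast hJ.cn_sq z.re
  have h2 : (D z.re : ℂ) ^ 2 = 1 - (k : ℂ) ^ 2 * (S z.re : ℂ) ^ 2 := mod_cast hJ.dn_sq z.re
  have h3 : (c z.im : ℂ) ^ 2 = 1 - (s z.im : ℂ) ^ 2 := mod_cast hj.cn_sq z.im
  have h4 : (d z.im : ℂ) ^ 2 = 1 - (1 - (k : ℂ) ^ 2) * (s z.im : ℂ) ^ 2 :=
    mod_cast hj.dn_sq z.im
  have hI := Complex.I_sq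
  set σ : ℂ := S z.re * d z.im + Complex.I * (C z.re * D z.re * (s z.im * c z.im)) with hσ
  set η : ℂ := D z.re * (c z.im * d z.im)
    - Complex.I * ((k : ℂ) ^ 2 * (S z.re * C z.re * s z.im)) with hη
  have hder := hasDerivAt_div_of_hasFDerivAt (e := -(σ * η / jacobiDen k S s c z ^ 2)) hN hQ hz
    fun w => by
      have hw := Complex.re_add_im w
      have hz2 : -(σ * η / jacobiDen k S s c z ^ 2) * jacobiDen k S s c z ^ 2 * w
          = -(σ * η) * (w.re + w.im * Complex.I) := by
        rw [hw]; field_simp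
      rw [hz2]
      simp only [jacobiCnNum, jacobiDen, hσ, hη]
      simp [-Complex.re_add_im]
      linear_combination w.re * jacobi_cn_deriv_re h1 h2 h3 h4 hI
        + w.im * jacobi_cn_deriv_im h1 h2 h3 h4 hI
  refine ⟨_, hder.const_mul (2 * (k : ℂ)), ?_⟩
  have h5 : σ ^ 2 + jacobiCnNum S C D s c d z ^ 2 = jacobiDen k S s c z ^ 2 := by
    simp only [jacobiCnNum, jacobiDen, hσ]
    linear_combination jacobi_sn_sq_add_cn_sq h1 h2 h3 h4 hI
  have h6 : η ^ 2 + (k : ℂ) ^ 2 * σ ^ 2 = jacobiDen k S s c z ^ 2 := by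
    simp only [jacobiDen, hσ, hη]
    linear_combination jacobi_dn_sq_add_sn_sq h1 h2 h3 h4 hI
  have h7 : (jacobiCnNum S C D s c d z / jacobiDen k S s c z) ^ 2
      = 1 - (σ / jacobiDen k S s c z) ^ 2 := by
    field_simp
    linear_combination h5
  have h8 : (η / jacobiDen k S s c z) ^ 2 = 1 - (k : ℂ) ^ 2 * (σ / jacobiDen k S s c z) ^ 2 := by
    field_simp
    linear_combination h6
  rw [mul_pow (2 * (k : ℂ)) (_ / _), h7]
  linear_combination 4 * (k : ℂ) ^ 2 * (σ / jacobiDen k S s c z) ^ 2 * h8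

theorem jacobiDen_ne_zero_of_cn_ne_zero {z : ℂ} (hz : c z.im ≠ 0) : jacobiDen k S s c z ≠ 0 := by
  have h : 0 < c z.im ^ 2 + k ^ 2 * S z.re ^ 2 * s z.im ^ 2 := by positivity
  unfold jacobiDen
  exact_mod_cast h.ne'

theorem jacobiDen_ne_zero_of_numConj_ne_zero (hk : k ≠ 0) {z : ℂ}
    (hz : jacobiCnNumConj S C D s c d z ≠ 0) : jacobiDen k S s c z ≠ 0 := by
  by_cases hc : c z.im = 0
  · have h : S z.re ≠ 0 ∧ s z.im ≠ 0 := by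
      constructor <;> intro h0 <;> simp [jacobiCnNumConj, hc, h0] at hz
    simp [jacobiDen, hc, hk, h.1, h.2]
  · exact jacobiDen_ne_zero_of_cn_ne_zero hc

theorem hasDerivAt_jacobiCnNumConj (hJ : IsJacobiTriple (k ^ 2) S C D)
    (hj : IsJacobiTriple (1 - k ^ 2) s c d) {b : ℝ} (hcb : c b = 0) (hsb : s b = 1)
    (hdb : d b = k) :
    HasDerivAt (jacobiCnNumConj S C D s c d) (Complex.I * k) (Complex.I * b) := by
  have hre : (Complex.I * (b : ℂ)).re = 0 := by simp
  have him : (Complex.I * (b : ℂ)).im = b := by simp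
  have hS := (hJ.hasDerivAt_sn (Complex.I * (b : ℂ)).re).hasFDerivAt_comp_re
  have hC := (hJ.hasDerivAt_cn (Complex.I * (b : ℂ)).re).hasFDerivAt_comp_re
  have hD := (hJ.hasDerivAt_dn (Complex.I * (b : ℂ)).re).hasFDerivAt_comp_re
  have hs := (hj.hasDerivAt_sn (Complex.I * (b : ℂ)).im).hasFDerivAt_comp_im
  have hc := (hj.hasDerivAt_cn (Complex.I * (b : ℂ)).im).hasFDerivAt_comp_im
  have hd := (hj.hasDerivAt_dn (Complex.I * (b : ℂ)).im).hasFDerivAt_comp_im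
  have hN : HasFDerivAt (jacobiCnNumConj S C D s c d) _ (Complex.I * (b : ℂ)) :=
    (hC.mul hc).add (((hS.mul hD).mul (hs.mul hd)).const_mul Complex.I)
  rw [hasDerivAt_iff_hasFDerivAt]
  refine hasFDerivAt_of_restrictScalars ℝ hN ?_
  ext w
  have hw := Complex.re_add_im w
  simp only [hre, him]
  simp [hJ.sn_zero, hJ.cn_zero, hJ.dn_zero, hcb, hsb, hdb]
  linear_combination (-Complex.I * k) * hw + k * w.im * Complex.I_sq

theorem tendsto_sub_mul_jacobiCn (hk : k ≠ 0) (hJ : IsJacobiTriple (k ^ 2) S C D)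
    (hj : IsJacobiTriple (1 - k ^ 2) s c d) {b : ℝ} (hcb : c b = 0) (hsb : s b = 1)
    (hdb : d b = k) :
    Tendsto (fun z : ℂ => (z - Complex.I * b) *
        (2 * k * (jacobiCnNum S C D s c d z / jacobiDen k S s c z)))
      (𝓝[≠] (Complex.I * b)) (𝓝 (-2 * Complex.I)) := by
  have hder := hasDerivAt_jacobiCnNumConj hJ hj hcb hsb hdb
  have hk' : (k : ℂ) ≠ 0 := mod_cast hk
  have hIk : Complex.I * (k : ℂ) ≠ 0 := mul_ne_zero Complex.I_ne_zero hk'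
  have hzero : jacobiCnNumConj S C D s c d (Complex.I * b) = 0 := by
    simp [jacobiCnNumConj, hJ.sn_zero, hcb]
  have hslope := (hasDerivAt_iff_tendsto_slope.1 hder).inv₀ hIk
  have hScont : Continuous S :=
    continuous_iff_continuousAt.2 fun t => (hJ.hasDerivAt_sn t).continuousAt
  have hdcont : Continuous d :=
    continuous_iff_continuousAt.2 fun t => (hj.hasDerivAt_dn t).continuousAt
  have hM : Tendsto (fun z : ℂ => 2 * (k : ℂ) * (1 - (S z.re : ℂ) ^ 2 * (d z.im : ℂ) ^ 2))
      (𝓝[≠] (Complex.I * b)) (𝓝 (2 * (k : ℂ))) := by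
    have hcont : Continuous fun z : ℂ =>
        2 * (k : ℂ) * (1 - (S z.re : ℂ) ^ 2 * (d z.im : ℂ) ^ 2) := by fun_prop
    have h := (hcont.tendsto (Complex.I * b)).mono_left
      (nhdsWithin_le_nhds (s := {Complex.I * (b : ℂ)}ᶜ))
    simpa [hJ.sn_zero] using h
  have hlim := hslope.mul hM
  have hval : (Complex.I * (k : ℂ))⁻¹ * (2 * k) = -2 * Complex.I := by
    field_simp
    linear_combination Complex.I_sq
  rw [hval] at hlim
  refine hlim.congr' ?_
  filter_upwards [hder.eventually_ne (c := 0) hIk] with z hz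
  have hden := jacobiDen_ne_zero_of_numConj_ne_zero hk hz
  have h1 : (C z.re : ℂ) ^ 2 = 1 - (S z.re : ℂ) ^ 2 := mod_cast hJ.cn_sq z.re
  have h2 : (D z.re : ℂ) ^ 2 = 1 - (k : ℂ) ^ 2 * (S z.re : ℂ) ^ 2 := mod_cast hJ.dn_sq z.re
  have h3 : (c z.im : ℂ) ^ 2 = 1 - (s z.im : ℂ) ^ 2 := mod_cast hj.cn_sq z.im
  have h4 : (d z.im : ℂ) ^ 2 = 1 - (1 - (k : ℂ) ^ 2) * (s z.im : ℂ) ^ 2 :=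
    mod_cast hj.dn_sq z.im
  have hconj : jacobiCnNum S C D s c d z * jacobiCnNumConj S C D s c d z
      = jacobiDen k S s c z * (1 - (S z.re : ℂ) ^ 2 * (d z.im : ℂ) ^ 2) := by
    simp only [jacobiCnNum, jacobiCnNumConj, jacobiDen]
    linear_combination jacobi_cn_mul_conj h1 h2 h3 h4 Complex.I_sq
  rw [slope_def_field, hzero, sub_zero, inv_div]
  field_simp
  linear_combination -(z - Complex.I * b) * hconj

theorem continuous_jacobiDen (hJ : IsJacobiTriple (k ^ 2) S C D)
    (hj : IsJacobiTriple (1 - k ^ 2) s c d) : Continuous (jacobiDen k S s c) := by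
  have hS : Continuous S := continuous_iff_continuousAt.2 fun t => (hJ.hasDerivAt_sn t).continuousAt
  have hs : Continuous s := continuous_iff_continuousAt.2 fun t => (hj.hasDerivAt_sn t).continuousAt
  have hc : Continuous c := continuous_iff_continuousAt.2 fun t => (hj.hasDerivAt_cn t).continuousAt
  unfold jacobiDen
  fun_prop

end ComplexArgument

theorem cosh_mul_cos_sub_I_mul_sinh_mul_sin_ne_zero {a : ℝ} (ha : a ≠ 0) (θ : ℝ) :
    Complex.cosh (a : ℂ) * Complex.cos (θ : ℂ)
      - Complex.I * Complex.sinh (a : ℂ) * Complex.sin (θ : ℂ) ≠ 0 := by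
  intro h
  have heq : Complex.cosh (a : ℂ) * Complex.cos (θ : ℂ)
      - Complex.I * Complex.sinh (a : ℂ) * Complex.sin (θ : ℂ)
      = ((Real.cosh a * Real.cos θ : ℝ) : ℂ) + ((-(Real.sinh a * Real.sin θ) : ℝ) : ℂ) * Complex.I := by
    push_cast; ring
  rw [heq] at h
  have hre := congrArg Complex.re h
  have him := congrArg Complex.im h
  simp only [Complex.add_re, Complex.add_im, Complex.re_ofReal_mul, Complex.im_ofReal_mul,
    Complex.ofReal_re, Complex.ofReal_im, Complex.I_re, Complex.I_im, Complex.zero_re,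
    Complex.zero_im, mul_zero, mul_one, add_zero, zero_add] at hre him
  have hcos : Real.cos θ = 0 := (mul_eq_zero.1 hre).resolve_left (Real.cosh_pos a).ne'
  have hsin : Real.sin θ = 0 :=
    (mul_eq_zero.1 (neg_eq_zero.1 him)).resolve_left (Real.sinh_ne_zero.2 ha)
  simpa [hcos, hsin] using Real.sin_sq_add_cos_sq θ

/-- Let `k ∈ (0,1)`, `k' = √(1−k²)`, and let `x^k` be the solution of the unperturbed
pendulum with `x^k(0) = (0, 2k)`. There is a meromorphic function `y` on a domain of `ℂ`
containing `ℝ` and `iK(k')` agreeing with `x^k₂` on `ℝ`, satisfying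
`(y')² = 1 − (1 − 2k² + y²/2)²` wherever it is analytic, having a simple pole at `iK(k')`
with residue `−2i`, and whose contour integral over small circles around `iK(k')` satisfies
`∮ y(t)(β cos(ωt+θ) − δ y(t)) dt = 4πβ(cosh(ωK(k')) cos θ − i sinh(ωK(k')) sin θ)`;
in particular this integral is nonzero for every `θ` whenever `β > 0`. -/
theorem stmt_17 (k : ℝ) (hk : k ∈ Set.Ioo (0 : ℝ) 1)
    (x : ℝ → ℝ × ℝ) (hx0 : x 0 = (0, 2 * k))
    (hx1 : ∀ t : ℝ, HasDerivAt (fun s => (x s).1) ((x t).2) t)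
    (hx2 : ∀ t : ℝ, HasDerivAt (fun s => (x s).2) (-Real.sin ((x t).1)) t) :
    ∃ (U : Set ℂ) (y : ℂ → ℂ),
      IsOpen U ∧ IsConnected U ∧
      (∀ t : ℝ, (t : ℂ) ∈ U) ∧
      (Complex.I * (Kell (Real.sqrt (1 - k ^ 2)) : ℂ)) ∈ U ∧
      MeromorphicOn y U ∧
      (∀ t : ℝ, y (t : ℂ) = ((x t).2 : ℂ)) ∧
      (∀ z ∈ U, AnalyticAt ℂ y z →
        (deriv y z) ^ 2 = 1 - (1 - 2 * (k : ℂ) ^ 2 + (y z) ^ 2 / 2) ^ 2) ∧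
      Tendsto (fun z : ℂ => (z - Complex.I * (Kell (Real.sqrt (1 - k ^ 2)) : ℂ)) * y z)
        (𝓝[≠] (Complex.I * (Kell (Real.sqrt (1 - k ^ 2)) : ℂ)))
        (𝓝 (-2 * Complex.I)) ∧
      (∀ ω : ℝ, 0 < ω → ∀ β δ θ : ℝ, ∃ ρ₀ > 0, ∀ ρ ∈ Set.Ioo (0 : ℝ) ρ₀,
        (∮ z in C(Complex.I * (Kell (Real.sqrt (1 - k ^ 2)) : ℂ), ρ),
            y z * ((β : ℂ) * Complex.cos ((ω : ℂ) * z + (θ : ℂ)) - (δ : ℂ) * y z))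
          = 4 * (π : ℂ) * (β : ℂ) *
            (Complex.cosh ((ω * Kell (Real.sqrt (1 - k ^ 2)) : ℝ) : ℂ) * Complex.cos (θ : ℂ)
             - Complex.I * Complex.sinh ((ω * Kell (Real.sqrt (1 - k ^ 2)) : ℝ) : ℂ)
               * Complex.sin (θ : ℂ)) ∧
        (0 < β →
          (∮ z in C(Complex.I * (Kell (Real.sqrt (1 - k ^ 2)) : ℂ), ρ),
              y z * ((β : ℂ) * Complex.cos ((ω : ℂ) * z + (θ : ℂ)) - (δ : ℂ) * y z)) ≠ 0)) := by
  have hk0 : k ≠ 0 := hk.1.ne'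
  have hk2 : k ^ 2 < 1 := by nlinarith [hk.1, hk.2]
  have hκ : √(1 - k ^ 2) ^ 2 = 1 - k ^ 2 := Real.sq_sqrt (by linarith)
  have hJ := isJacobiTriple_of_pendulum hk0 hx0 hx1 hx2
  obtain ⟨s, c, d, hj, hK, hcK, hsK, hdK, l, hl, hpos⟩ :=
    exists_isJacobiTriple (κ := √(1 - k ^ 2)) (by rw [hκ]; nlinarith [sq_pos_of_pos hk.1])
  rw [hκ] at hj
  generalize Kell √(1 - k ^ 2) = K at *
  have hdk : d K = k := by
    have h := hj.dn_sq K
    rw [hsK] at h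
    nlinarith [hk.1]
  set S : ℝ → ℝ := fun t => sin ((x t).1 / 2) / k
  set C : ℝ → ℝ := fun t => (x t).2 / (2 * k) with hC
  set D : ℝ → ℝ := fun t => cos ((x t).1 / 2)
  set p : ℂ := Complex.I * K with hp
  set y : ℂ → ℂ := fun w => 2 * k * (jacobiCnNum S C D s c d w / jacobiDen k S s c w) with hy
  have hlim : Tendsto (fun z => (z - p) * y z) (𝓝[≠] p) (𝓝 (-2 * Complex.I)) :=
    tendsto_sub_mul_jacobiCn hk0 hJ hj hcK hsK hdk
  have hden : ∀ᶠ z in 𝓝[≠] p, jacobiDen k S s c z ≠ 0 := by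
    have hIk : Complex.I * (k : ℂ) ≠ 0 := by simp [hk0]
    filter_upwards [(hasDerivAt_jacobiCnNumConj hJ hj hcK hsK hdk).eventually_ne (c := 0) hIk]
      with z hz using jacobiDen_ne_zero_of_numConj_ne_zero hk0 hz
  obtain ⟨r, hr, hball⟩ := Metric.eventually_nhds_iff_ball.1 (eventually_nhdsWithin_iff.1 hden)
  have hode := fun z (hz : jacobiDen k S s c z ≠ 0) => hasDerivAt_jacobiCn hJ hj hz
  obtain ⟨g, hga, hgp, hg', hyg⟩ := exists_regular_part_of_ode (A := 1 - 2 * (k : ℂ) ^ 2) hlim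
    (hden.mono hode)
  set U : Set ℂ := Complex.im ⁻¹' Set.Ioo l K ∪ Metric.ball p r with hU
  have hUden : ∀ z ∈ U, z ≠ p → jacobiDen k S s c z ≠ 0 := by
    rintro z (hz | hz) hzp
    · exact jacobiDen_ne_zero_of_cn_ne_zero (hpos _ hz).ne'
    · exact hball z hz hzp
  refine ⟨U, y, ?_, ?_, ?_, ?_, ?_, ?_, ?_, hlim, ?_⟩
  · exact (isOpen_Ioo.preimage Complex.continuous_im).union Metric.isOpen_ball
  · have hstrip : Convex ℝ (Complex.im ⁻¹' Set.Ioo l K) :=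
      (convex_Ioo l K).linear_preimage Complex.imLm
    have hm : 0 < min K r := lt_min hK hr
    have hmem : Complex.I * ((K - min K r / 2 : ℝ) : ℂ) ∈
        Complex.im ⁻¹' Set.Ioo l K ∩ Metric.ball p r := by
      constructor
      · simp only [Set.mem_preimage, Complex.I_mul_im, Complex.ofReal_re, Set.mem_Ioo]
        constructor <;> linarith [min_le_left K r]
      · rw [mem_ball_iff_norm, hp, ← mul_sub, ← Complex.ofReal_sub, norm_mul, Complex.norm_I,
          one_mul, Complex.norm_real, Real.norm_eq_abs, abs_lt]
        constructor <;> linarith [min_le_right K r]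
    exact IsConnected.union ⟨_, hmem⟩ (hstrip.isConnected ⟨_, hmem.1⟩)
      ((convex_ball p r).isConnected ⟨_, hmem.2⟩)
  · exact fun t => Or.inl (by simp [hl, hK])
  · exact Or.inr (Metric.mem_ball_self hr)
  · intro z hz
    by_cases hzp : z = p
    · subst hzp
      have hinv : MeromorphicAt (fun z => (z - p)⁻¹ * g z) p :=
        (((analyticAt_id.sub analyticAt_const).meromorphicAt).inv).mul hga.meromorphicAt
      exact hinv.congr (hyg.mono fun w hw => hw.symm)
    · refine AnalyticAt.meromorphicAt (Complex.analyticAt_iff_eventually_differentiableAt.2 ?_)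
      filter_upwards [(continuous_jacobiDen hJ hj).continuousAt.eventually_ne (hUden z hz hzp)]
        with w hw
      obtain ⟨y', hy', _⟩ := hode w hw
      exact hy'.differentiableAt
  · intro t
    have hk' : (k : ℂ) ≠ 0 := mod_cast hk0
    simp only [hy, hC, jacobiCnNum, jacobiDen, Complex.ofReal_re, Complex.ofReal_im, hj.sn_zero,
      hj.cn_zero, hj.dn_zero]
    push_cast
    field_simp
    ring
  · intro z hz han
    by_cases hzp : z = p
    · subst hzp
      have hcont : Tendsto (fun z => (z - p) * y z) (𝓝[≠] p) (𝓝 ((p - p) * y p)) :=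
        ((continuousAt_id.sub continuousAt_const).mul han.continuousAt).tendsto.mono_left
          nhdsWithin_le_nhds
      have h := tendsto_nhds_unique hcont hlim
      simp at h
    · obtain ⟨y', hy', hy2⟩ := hode z (hUden z hz hzp)
      rw [hy'.deriv]
      exact hy2
  · intro ω hω β δ θ
    obtain ⟨ρ₀, hρ₀, hint⟩ := circleIntegral_mul_sub_eq hga hg' hyg
      (u := fun z => (β : ℂ) * Complex.cos ((ω : ℂ) * z + θ)) (by fun_prop) δ
    refine ⟨ρ₀, hρ₀, fun ρ hρ => ?_⟩
    have hval : 2 * π * Complex.I * (g p * (β * Complex.cos (ω * p + θ)))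
        = 4 * (π : ℂ) * (β : ℂ) *
          (Complex.cosh ((ω * K : ℝ) : ℂ) * Complex.cos (θ : ℂ)
            - Complex.I * Complex.sinh ((ω * K : ℝ) : ℂ) * Complex.sin (θ : ℂ)) := by
      have harg : (ω : ℂ) * p = ((ω * K : ℝ) : ℂ) * Complex.I := by
        rw [hp]; push_cast; ring
      rw [hgp, Complex.cos_add, harg, Complex.cos_mul_I, Complex.sin_mul_I]
      linear_combination (-4 * (π : ℂ) * β * (Complex.cosh ((ω * K : ℝ) : ℂ) * Complex.cos (θ : ℂ)
        - Complex.I * Complex.sinh ((ω * K : ℝ) : ℂ) * Complex.sin (θ : ℂ))) * Complex.I_sq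
    rw [hint ρ hρ, hval]
    refine ⟨rfl, fun hβ => mul_ne_zero (by simp [hβ.ne', Real.pi_ne_zero]) ?_⟩
    exact cosh_mul_cos_sub_I_mul_sinh_mul_sin_ne_zero (mul_pos hω hK).ne' θ
end
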